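/- Let P be a finite poset with d = dim k[O(P)]. If the Stanley-Reisner ring k[O(P)] satisfies Serre's condition (S_ℓ), then the reduced homology H̃_{i−1}(O(P_{>j}); k) vanishes whenever i + j < d and 0 ≤ i < ℓ. In particular, if Δ is a simplicial complex satisfying (S_ℓ), then H̃_{i−1}([Δ]_{>j}; k) = 0 whenever i + j < d and 0 ≤ i < ℓ. -/

import Mathlib

open Finset

/-- An abstract simplicial complex on vertex type `V`, given by a finite, downward closed
family of finite subsets of `V` (its faces). -/
structure SComplex (V : Type) [DecidableEq V] where
  faces : Finset (Finset V)
  down_closed : ∀ ⦃s t : Finset V⦄, s ∈ faces → t ⊆ s → t ∈ faces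

namespace SComplex

variable {V : Type} [DecidableEq V]

/-- `K.rank = d = dim k[Δ] = dim Δ + 1` is the maximal cardinality of a face of `K`. -/
def rank (K : SComplex V) : ℕ := K.faces.sup Finset.card

/-- `F` is a facet (maximal face) of `K`. -/
def IsFacet (K : SComplex V) (F : Finset V) : Prop :=
  F ∈ K.faces ∧ ∀ G ∈ K.faces, F ⊆ G → F = G

/-- `K` is pure: all facets have the maximal cardinality `K.rank`. -/
def Pure (K : SComplex V) : Prop := ∀ F : Finset V, K.IsFacet F → F.card = K.rank

/-- The link `lk_K(T) = {G ∈ K | T ∪ G ∈ K, T ∩ G = ∅}`. -/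
def link (K : SComplex V) (T : Finset V) : SComplex V where
  faces := K.faces.filter fun G => Disjoint T G ∧ T ∪ G ∈ K.faces
  down_closed := by
    intro s t hs hts
    simp only [Finset.mem_filter] at hs ⊢
    exact ⟨K.down_closed hs.1 hts, hs.2.1.mono_right hts,
      K.down_closed hs.2.2 (Finset.union_subset_union_right hts)⟩

/-- The anti-star `ast_K(T) = {G ∈ K | T ∩ G = ∅}`. -/
def antistar (K : SComplex V) (T : Finset V) : SComplex V where
  faces := K.faces.filter fun G => Disjoint T G
  down_closed := by
    intro s t hs hts
    simp only [Finset.mem_filter] at hs ⊢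
    exact ⟨K.down_closed hs.1 hts, hs.2.mono_right hts⟩

/-- The induced subcomplex of `K` on a set `W` of vertices. -/
def restrict (K : SComplex V) (W : Finset V) : SComplex V where
  faces := K.faces.filter fun G => G ⊆ W
  down_closed := by
    intro s t hs hts
    simp only [Finset.mem_filter] at hs ⊢
    exact ⟨K.down_closed hs.1 hts, hts.trans hs.2⟩

/-- The subcomplex of faces of cardinality at most `m`; as cardinality = dimension + 1, this is
the `(m-1)`-skeleton `Δ^{(m-1)}`. -/
def skelCard (K : SComplex V) (m : ℕ) : SComplex V where
  faces := K.faces.filter fun G => G.card ≤ m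
  down_closed := by
    intro s t hs hts
    simp only [Finset.mem_filter] at hs ⊢
    exact ⟨K.down_closed hs.1 hts, le_trans (Finset.card_le_card hts) hs.2⟩

/-- `K.trunc j` is `[Δ]_{>j}`, the order complex of the poset of faces of `K` of cardinality
(equivalently, of height in the face poset) `> j`: its faces are the chains of such faces.
For `j = 0` this is the barycentric subdivision of `K`. -/
def trunc (K : SComplex V) (j : ℕ) : SComplex (Finset V) where
  faces := K.faces.powerset.filter fun C =>
    (∀ s ∈ C, j < s.card) ∧ ∀ s ∈ C, ∀ t ∈ C, s ⊆ t ∨ t ⊆ s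
  down_closed := by
    intro s t hs hts
    simp only [Finset.mem_powerset, Finset.mem_filter] at hs ⊢
    exact ⟨hts.trans hs.1, fun a ha => hs.2.1 a (hts ha),
      fun a ha b hb => hs.2.2 a (hts ha) b (hts hb)⟩

/-- `Δ_A`: the complex obtained from `K` by deleting all faces containing a member of `A`. -/
def deleteAbove (K : SComplex V) (A : Finset (Finset V)) : SComplex V where
  faces := K.faces.filter fun s => ∀ τ ∈ A, ¬ τ ⊆ s
  down_closed := by
    intro s t hs hts
    simp only [Finset.mem_filter] at hs ⊢
    exact ⟨K.down_closed hs.1 hts, fun τ hτ hsub => hs.2 τ hτ (hsub.trans hts)⟩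

/-- The number of faces of `K` of cardinality `i`, i.e. the face number `f_{i-1}(K)`. -/
def faceCount (K : SComplex V) (i : ℕ) : ℕ := (K.faces.filter fun s => s.card = i).card

/-- The Euler characteristic `χ(K) = Σ_{i ≥ 0} (-1)^i f_i(K)`. -/
def eulerChar (K : SComplex V) : ℤ :=
  ∑ s ∈ K.faces.filter (fun s => s ≠ ∅), (-1 : ℤ) ^ (s.card - 1)

/-- The reduced Euler characteristic `χ̃(K) = χ(K) - 1`. -/
def reducedEulerChar (K : SComplex V) : ℤ := eulerChar K - 1

end SComplex

/-! ### Simplicial homology with coefficients in a field `k` -/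

/-- An arbitrary linear order on a finite type. -/
noncomputable def arbOrder (V : Type) [Fintype V] : LinearOrder V :=
  LinearOrder.lift' (Fintype.equivFin V) (Equiv.injective _)

namespace SComplex

variable {V : Type} [DecidableEq V]

/-- The faces of `K` of cardinality `n`, as a type. -/
def Faces (K : SComplex V) (n : ℕ) : Type :=
  {s : Finset V // s ∈ K.faces ∧ s.card = n}

/-- The space of reduced simplicial `n`-chains of `K`: formal `k`-linear combinations of the
faces of cardinality `n` (such a face has dimension `n - 1`; the empty face sits in degree `0`,
which produces *reduced* homology). -/
abbrev ChainsOf (k : Type) [Field k] (K : SComplex V) (n : ℕ) : Type := Faces K n →₀ k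

variable (k : Type) [Field k] [Fintype V]

/-- The simplicial boundary map, with signs determined by an arbitrary but fixed linear order
on the vertices. -/
noncomputable def bd (K : SComplex V) (n : ℕ) :
    ChainsOf k K n →ₗ[k] ChainsOf k K (n - 1) :=
  letI : LinearOrder V := arbOrder V
  Finsupp.lsum k fun s : Faces K n =>
    LinearMap.toSpanSingleton k (ChainsOf k K (n - 1))
      (∑ x ∈ s.1.attach,
        ((-1 : k) ^ (s.1.filter (fun y => y < x.1)).card) •
          Finsupp.single
            (⟨s.1.erase x.1,
              K.down_closed s.2.1 (Finset.erase_subset _ _),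
              by rw [Finset.card_erase_of_mem x.2, s.2.2]⟩ : Faces K (n - 1))
            (1 : k))

/-- `HVanish k K i` says that the reduced simplicial homology `H̃_{i-1}(K; k)` vanishes.
Note the indexing convention: the index `i` is the *cardinality* of the relevant faces, so this
is reduced homology in topological degree `i - 1`; e.g. `HVanish k K 1` says `H̃₀(K; k) = 0`
(`K` is connected and nonempty) and `HVanish k K 0` says `H̃₋₁(K; k) = 0` (`K` has a face).
Since the cycles in degree `i - 1` are `ker ∂ᵢ` and the boundaries are `im ∂ᵢ₊₁`, and the
boundaries are always contained in the cycles, vanishing of homology says exactly that every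
cycle is a boundary. -/
def HVanish (K : SComplex V) (i : ℕ) : Prop :=
  LinearMap.ker (bd k K i) ≤ LinearMap.range (bd k K (i + 1))

/-- `redHomologyRank k K i` is the dimension `dim_k H̃_{i-1}(K; k)` of the reduced simplicial
homology of `K` in topological degree `i - 1` (cardinality index `i`), namely the dimension of
the cycles `ker ∂ᵢ` modulo the boundaries `im ∂ᵢ₊₁`. -/
noncomputable def redHomologyRank (K : SComplex V) (i : ℕ) : ℕ :=
  Module.finrank k ↥(LinearMap.ker (bd k K i)) -
    Module.finrank k ↥(LinearMap.range (bd k K (i + 1)) ⊓ LinearMap.ker (bd k K i))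

end SComplex

/-! ### Depth, Serre conditions, and Stanley–Reisner rings -/

/-- The length of a longest regular sequence on `R` contained in the ideal `I`
(the `I`-depth of `R`). -/
noncomputable def depthIn (R : Type) [CommRing R] (I : Ideal R) : ℕ :=
  sSup {n : ℕ | ∃ rs : List R, rs.length = n ∧ (∀ r ∈ rs, r ∈ I) ∧
    RingTheory.Sequence.IsRegular R rs}

/-- Serre's condition `(S_ℓ)` for a commutative ring:
`depth R_p ≥ min {ℓ, dim R_p}` for every prime `p`. -/
def SerreCondS (ℓ : ℕ) (R : Type) [CommRing R] : Prop :=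
  ∀ (p : Ideal R) (hp : p.IsPrime),
    haveI := hp
    min ((ℓ : ℕ∞) : WithBot ℕ∞) (ringKrullDim (Localization.AtPrime p)) ≤
      ((depthIn (Localization.AtPrime p)
        (IsLocalRing.maximalIdeal (Localization.AtPrime p)) : ℕ∞) : WithBot ℕ∞)

namespace SComplex

variable {V : Type} [DecidableEq V] (k : Type) [Field k]

/-- The Stanley–Reisner ideal of `K`: generated by the squarefree monomials supported on
non-faces. -/
noncomputable def srIdeal (K : SComplex V) : Ideal (MvPolynomial V k) :=
  Ideal.span ((fun s : Finset V => ∏ v ∈ s, MvPolynomial.X v) '' {s : Finset V | s ∉ K.faces})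

/-- The Stanley–Reisner ring `k[Δ]`. -/
noncomputable abbrev SRRing (K : SComplex V) : Type := MvPolynomial V k ⧸ srIdeal k K

/-- `depth k[Δ]`: the depth of the Stanley–Reisner ring with respect to its irrelevant
(graded maximal) ideal. -/
noncomputable def srDepth (K : SComplex V) : ℕ :=
  depthIn (SRRing k K)
    (Ideal.span (Set.range fun v : V => Ideal.Quotient.mk (srIdeal k K) (MvPolynomial.X v)))

/-- `k[Δ]` satisfies Serre's condition `(S_ℓ)`. -/
def SerreS (ℓ : ℕ) (K : SComplex V) : Prop := SerreCondS ℓ (SRRing k K)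

end SComplex

/-! ### Order complexes of finite posets -/

/-- The order complex `O(P)` of a finite poset: its faces are the chains of `P`. -/
def orderComplex (P : Type) [DecidableEq P] [Fintype P] [PartialOrder P]
    [∀ a b : P, Decidable (a ≤ b)] : SComplex P where
  faces := Finset.univ.filter fun C : Finset P => ∀ a ∈ C, ∀ b ∈ C, a ≤ b ∨ b ≤ a
  down_closed := by
    intro s t hs hts
    simp only [Finset.mem_filter, Finset.mem_univ, true_and] at hs ⊢
    exact fun a ha b hb => hs a (hts ha) b (hts hb)

/-- The height of an element of a finite poset: the maximal cardinality of a chain with top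
element `p` (so minimal elements have height `1`). -/
def pheight {P : Type} [DecidableEq P] [Fintype P] [PartialOrder P]
    [∀ a b : P, Decidable (a ≤ b)] (p : P) : ℕ :=
  Finset.sup (Finset.univ.filter fun C : Finset P =>
    p ∈ C ∧ (∀ a ∈ C, a ≤ p) ∧ ∀ a ∈ C, ∀ b ∈ C, a ≤ b ∨ b ≤ a) Finset.card

/-- The height `ht P` of a finite poset: the maximal cardinality of a chain. -/
def pheightMax (P : Type) [DecidableEq P] [Fintype P] [PartialOrder P]
    [∀ a b : P, Decidable (a ≤ b)] : ℕ :=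
  Finset.univ.sup (pheight (P := P))

/-- `O(P_{>j})`: the full subcomplex of the order complex on the elements of height `> j`. -/
def ocAbove (P : Type) [DecidableEq P] [Fintype P] [PartialOrder P]
    [∀ a b : P, Decidable (a ≤ b)] (j : ℕ) : SComplex P :=
  (orderComplex P).restrict (Finset.univ.filter fun p => j < pheight p)

/-- The face poset `F(Δ)` of a simplicial complex: the nonempty faces, ordered by inclusion. -/
abbrev SComplex.FacePoset {V : Type} [DecidableEq V] (K : SComplex V) : Type :=
  {s : Finset V // s ∈ K.faces ∧ s ≠ ∅}

instance {V : Type} [DecidableEq V] (K : SComplex V) :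
    ∀ a b : K.FacePoset, Decidable (a ≤ b) := fun a b =>
  decidable_of_iff (a.1 ≤ b.1) Subtype.coe_le_coe

/-! Localize `k[Δ]` at the prime generated by the variables outside a face `F` contained in a facet
of cardinality `n`. By `(S_ℓ)` the Koszul cohomology of these variables vanishes in degrees
`i < min ℓ (n - #F)`, and its squarefree part is the cohomology of the link of `F`, with index `i`
for the cardinality of the faces. For `ℓ > 1` the links of dimension at least one are thus
connected, so `Δ` is pure and all links of faces have vanishing cohomology for `0 < i < ℓ`,
`i + #F < d`.

The order complex of `P_{>j}` is obtained from that of `P` by deleting the elements `p` of height at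
most `j`, from the largest to the smallest. When `p` is deleted, its link is the order complex of
`P_{>p}`, which is the link of a maximal chain with top element `p`, hence has no cohomology in the
relevant degrees, and the cohomology of the complex survives the deletion.

For `[Δ]_{>j}`, hypotheses on `k[Δ]` do not immediately pass to the barycentric subdivision.
Instead, delete the vertices of `Δ` from the part of the mapping cylinder of the subdivision lying
over `[Δ]_{>j}`. The links met on the way are those of faces `F` of `Δ`: such a link has the
cohomology of the link of `F` in `Δ` if `#F ≤ j`, and is acyclic otherwise.
Cohomology vanishing yields homology vanishing by duality over the field `k`. -/

/-! ### The Koszul complex -/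

namespace Koszul

section Sign

variable {V ι : Type*} [LinearOrder ι]

/-- The sign of `v` relative to `S` in an exterior algebra on `V`, the basis being ordered by `e`:
it is `(-1) ^ r`, where `r` is the number of elements of `S` that precede `v`. -/
def sign (e : V ↪ ι) (v : V) (S : Finset V) : ℤ := (-1) ^ #{y ∈ S | e y < e v}

lemma sign_mul_self (e : V ↪ ι) (v : V) (S : Finset V) : sign e v S * sign e v S = 1 := by
  rw [sign, ← mul_pow]
  simp

lemma sign_map {W : Type*} (e : W ↪ ι) (φ : V ↪ W) (v : V) (S : Finset V) :
    sign e (φ v) (S.map φ) = sign (φ.trans e) v S := by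
  simp [sign, filter_map]

variable [DecidableEq V] (e : V ↪ ι)

lemma sign_insert_self (v : V) (S : Finset V) : sign e v (insert v S) = sign e v S := by
  rw [sign, filter_insert, if_neg (lt_irrefl _), sign]

lemma sign_erase_self (v : V) (S : Finset V) : sign e v (S.erase v) = sign e v S := by
  rw [sign, filter_erase, erase_eq_of_notMem (by simp), sign]

lemma sign_insert_of_notMem (v : V) {w : V} {S : Finset V} (hw : w ∉ S) :
    sign e v (insert w S) = (if e w < e v then -1 else 1) * sign e v S := by
  rw [sign, sign, filter_insert]
  split_ifs
  · rw [card_insert_of_notMem (by simp [hw]), pow_succ']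
  · rw [one_mul]

lemma sign_insert_mul_sign {v w : V} {S : Finset V} (hvw : v ≠ w) (hv : v ∉ S) (hw : w ∉ S) :
    sign e v (insert w S) * sign e w S = -(sign e w (insert v S) * sign e v S) := by
  rw [sign_insert_of_notMem e v hw, sign_insert_of_notMem e w hv]
  rcases lt_or_gt_of_ne (e.injective.ne hvw) with h | h
  · rw [if_neg h.not_gt, if_pos h]; ring
  · rw [if_neg h.not_gt, if_pos h]; ring

lemma sign_mul_sign_erase {v w : V} {S : Finset V} (hvw : v ≠ w) (hv : v ∈ S) (hw : w ∈ S) :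
    sign e v S * sign e w (S.erase v) = -(sign e w S * sign e v (S.erase w)) := by
  obtain ⟨T, hvT, rfl⟩ : ∃ T, v ∉ T ∧ insert v T = S :=
    ⟨S.erase v, notMem_erase v S, insert_erase hv⟩
  obtain ⟨R, hwR, rfl⟩ : ∃ R, w ∉ R ∧ insert w R = T :=
    ⟨T.erase w, notMem_erase w T, insert_erase (mem_of_mem_insert_of_ne hw hvw.symm)⟩
  have hvR : v ∉ R := fun h => hvT (mem_insert_of_mem h)
  rw [erase_insert hvT, sign_insert_self, sign_insert_self, insert_comm,
    erase_insert (by simp [hvw.symm, hwR]), sign_insert_self, sign_insert_self]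
  exact sign_insert_mul_sign e hvw hvR hwR

lemma sign_mul_sign_insert {v w : V} {S : Finset V} (hv : v ∈ S) (hw : w ∉ S) :
    sign e v S * sign e w (S.erase v) = -(sign e w S * sign e v (insert w S)) := by
  have h := sign_mul_sign_erase e (ne_of_mem_of_not_mem hv hw) (mem_insert_of_mem hv)
    (mem_insert_self w S)
  rw [erase_insert hw, sign_insert_self, erase_insert_of_ne (ne_of_mem_of_not_mem hv hw).symm,
    sign_insert_self] at h
  linear_combination (sign e v S * sign e v (insert w S)) * h
    - (sign e v S * sign e w (S.erase v)) * sign_mul_self e v (insert w S)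
    - (sign e v (insert w S) * sign e w S) * sign_mul_self e v S

end Sign

section Differential

variable {V ι A M : Type*} [LinearOrder ι] [DecidableEq V] [CommRing A] [AddCommGroup M]
  [Module A M] (e : V ↪ ι)

/-- The differential of the Koszul cochain complex of the family `y` with values in `M`. A cochain
is a function on the basis of the exterior algebra on `V`, and all degrees are treated at once: the
degree of a basis element `S` is its cardinality. -/
def differential (y : V → A) : (Finset V → M) →ₗ[A] (Finset V → M) :=
  LinearMap.pi fun T => ∑ v ∈ T, sign e v T • y v • LinearMap.proj (T.erase v)

lemma differential_apply (y : V → A) (c : Finset V → M) (T : Finset V) :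
    differential e y c T = ∑ v ∈ T, sign e v T • y v • c (T.erase v) := by
  simp [differential]

@[simp]
lemma differential_empty (y : V → A) (c : Finset V → M) : differential e y c ∅ = 0 := by
  simp [differential_apply]

lemma differential_congr {y z : V → A} {c d : Finset V → M} {T : Finset V}
    (h : ∀ v ∈ T, y v • c (T.erase v) = z v • d (T.erase v)) :
    differential e y c T = differential e z d T := by
  rw [differential_apply, differential_apply]
  exact sum_congr rfl fun v hv => by rw [h v hv]

lemma map_differential {B N : Type*} [CommRing B] [AddCommGroup N] [Module B N] {σ : A →+* B}
    (f : M →ₛₗ[σ] N) (y : V → A) (c : Finset V → M) (T : Finset V) :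
    f (differential e y c T) = differential e (σ ∘ y) (f ∘ c) T := by
  simp [differential_apply, map_sum, map_zsmul]

lemma differential_map {W : Type*} [DecidableEq W] (φ : V ↪ W) (e : W ↪ ι) (y : W → A)
    (c : Finset W → M) (T : Finset V) :
    differential e y c (T.map φ) = differential (φ.trans e) (y ∘ φ) (c ∘ map φ) T := by
  simp [differential_apply, sign_map, map_erase]

lemma differential_differential (y : V → A) (c : Finset V → M) :
    differential e y (differential e y c) = 0 := by
  ext T
  simp only [differential_apply, smul_sum, Pi.zero_apply]
  rw [sum_sigma']
  refine sum_involution (fun p _ => ⟨p.2, p.1⟩) ?_ ?_ ?_ fun _ _ => rfl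
  · rintro ⟨v, w⟩ h
    simp only [mem_sigma, mem_erase] at h ⊢
    obtain ⟨hv, hwv, hw⟩ := h
    rw [erase_right_comm, smul_comm (y v) (sign e w (T.erase v)),
      smul_comm (y w) (sign e v (T.erase w)), smul_comm (y w) (y v), smul_smul,
      smul_smul (sign e w T), sign_mul_sign_erase e hwv.symm hv hw, neg_smul, neg_add_cancel]
  · rintro ⟨v, w⟩ h _ h'
    simp only [mem_sigma, mem_erase] at h
    exact h.2.1 (congrArg Sigma.fst h')
  · rintro ⟨v, w⟩ h
    simp only [mem_sigma, mem_erase] at h ⊢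
    exact ⟨h.2.2, h.2.1.symm, h.1⟩

/-- Contraction of a cochain with the basis vector of `w`. -/
def contract (w : V) (c : Finset V → M) (S : Finset V) : M :=
  if w ∈ S then 0 else sign e w S • c (insert w S)

/-- Exterior multiplication of a cochain by the basis vector of `w`. -/
def wedge (w : V) (c : Finset V → M) (S : Finset V) : M :=
  if w ∈ S then sign e w S • c (S.erase w) else 0

lemma contract_of_mem {w : V} {S : Finset V} (hw : w ∈ S) (c : Finset V → M) :
    contract e w c S = 0 := if_pos hw

lemma contract_of_notMem {w : V} {S : Finset V} (hw : w ∉ S) (c : Finset V → M) :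
    contract e w c S = sign e w S • c (insert w S) := if_neg hw

lemma wedge_of_mem {w : V} {S : Finset V} (hw : w ∈ S) (c : Finset V → M) :
    wedge e w c S = sign e w S • c (S.erase w) := if_pos hw

lemma wedge_of_notMem {w : V} {S : Finset V} (hw : w ∉ S) (c : Finset V → M) :
    wedge e w c S = 0 := if_neg hw

lemma wedge_contract {w : V} {S : Finset V} (hw : w ∈ S) (c : Finset V → M) :
    wedge e w (contract e w c) S = c S := by
  rw [wedge_of_mem e hw, contract_of_notMem e (notMem_erase w S), insert_erase hw,
    sign_erase_self, smul_smul, sign_mul_self, one_smul]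

lemma contract_eq_zero {w : V} {c : Finset V → M} {S : Finset V}
    (h : w ∉ S → c (insert w S) = 0) : contract e w c S = 0 := by
  by_cases hw : w ∈ S
  · exact contract_of_mem e hw c
  · rw [contract_of_notMem e hw, h hw, smul_zero]

lemma differential_contract_add_contract_differential (y : V → A) (w : V) (c : Finset V → M)
    (S : Finset V) :
    differential e y (contract e w c) S + contract e w (differential e y c) S = y w • c S := by
  by_cases hw : w ∈ S
  · rw [contract_of_mem e hw, add_zero, differential_apply, sum_eq_single_of_mem w hw,
      contract_of_notMem e (notMem_erase w S), insert_erase hw, sign_erase_self,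
      smul_comm (y w), smul_smul, sign_mul_self, one_smul]
    intro v _ hvw
    rw [contract_of_mem e (mem_erase.2 ⟨hvw.symm, hw⟩), smul_zero, smul_zero]
  · rw [contract_of_notMem e hw, differential_apply, differential_apply, sum_insert hw, smul_add,
      smul_smul, sign_insert_self, sign_mul_self, one_smul, erase_insert hw, add_left_comm,
      smul_sum, ← sum_add_distrib, sum_eq_zero, add_zero]
    intro v hv
    have hwv : w ≠ v := (ne_of_mem_of_not_mem hv hw).symm
    rw [contract_of_notMem e (fun h => hw (mem_of_mem_erase h)), erase_insert_of_ne hwv,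
      smul_comm (y v), smul_smul, smul_smul, sign_mul_sign_insert e hv hw, neg_smul,
      neg_add_cancel]

lemma differential_wedge (y : V → A) (w : V) (c : Finset V → M) :
    differential e y (wedge e w c) = -wedge e w (differential e y c) := by
  ext S
  rw [Pi.neg_apply, differential_apply]
  by_cases hw : w ∈ S
  · rw [wedge_of_mem e hw, ← add_sum_erase _ _ hw, wedge_of_notMem e (notMem_erase w S), smul_zero,
      smul_zero, zero_add, differential_apply, smul_sum, ← sum_neg_distrib]
    refine sum_congr rfl fun v hv => ?_
    obtain ⟨hvw, hv⟩ := mem_erase.1 hv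
    rw [wedge_of_mem e (mem_erase.2 ⟨hvw.symm, hw⟩), smul_comm (y v), smul_smul, smul_smul,
      sign_mul_sign_erase e hvw hv hw, neg_smul, erase_right_comm]
  · rw [wedge_of_notMem e hw, neg_zero]
    refine sum_eq_zero fun v _ => ?_
    rw [wedge_of_notMem e (fun h => hw (mem_of_mem_erase h)), smul_zero, smul_zero]

end Differential

section Vanishing

variable {V ι A M : Type*} [LinearOrder ι] [DecidableEq V] [CommRing A] [AddCommGroup M]
  [Module A M] (e : V ↪ ι) (y : V → A)

/-- The vanishing of the `i`-th Koszul cohomology of `y` with values in `M`. -/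
def CohomologyVanishes (M : Type*) [AddCommGroup M] [Module A M] (i : ℕ) : Prop :=
  ∀ c : Finset V → M, (∀ T, #T = i + 1 → differential e y c T = 0) →
    ∃ b, ∀ S, #S = i → c S = differential e y b S

variable {e y}

lemma exists_smul_eq_differential {r : A} (hr : r ∈ Ideal.span (Set.range y)) {i : ℕ}
    {c : Finset V → M} (hc : ∀ T, #T = i + 1 → differential e y c T = 0) :
    ∃ b, ∀ S, #S = i → r • c S = differential e y b S := by
  induction hr using Submodule.span_induction with
  | mem _ hr =>
    obtain ⟨w, rfl⟩ := hr
    refine ⟨contract e w c, fun S hS => ?_⟩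
    rw [← differential_contract_add_contract_differential e, contract_eq_zero e fun hw => ?_,
      add_zero]
    exact hc _ (by rw [card_insert_of_notMem hw, hS])
  | zero => exact ⟨0, fun S _ => by simp⟩
  | add r s _ _ hr hs =>
    obtain ⟨b, hb⟩ := hr
    obtain ⟨d, hd⟩ := hs
    exact ⟨b + d, fun S hS => by rw [map_add, Pi.add_apply, add_smul, hb S hS, hd S hS]⟩
  | smul a r _ hr =>
    obtain ⟨b, hb⟩ := hr
    exact ⟨a • b, fun S hS => by rw [map_smul, Pi.smul_apply, smul_assoc, hb S hS]⟩

lemma cohomologyVanishes_zero_of_isSMulRegular {r : A} (hr : r ∈ Ideal.span (Set.range y))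
    (hreg : IsSMulRegular M r) : CohomologyVanishes e y M 0 := by
  intro c hc
  obtain ⟨b, hb⟩ := exists_smul_eq_differential hr hc
  refine ⟨0, fun S hS => hreg ?_⟩
  simp only
  rw [hb S hS, card_eq_zero.1 hS, differential_empty, differential_empty, smul_zero]

open scoped Pointwise in
lemma exists_eq_differential_add_smul {r : A} {i : ℕ}
    (hvan : CohomologyVanishes e y (QuotSMulTop r M) i) {b : Finset V → M}
    (hb : ∀ T, #T = i + 1 → ∃ z, differential e y b T = r • z) :
    ∃ g z : Finset V → M, ∀ S, #S = i → b S = differential e y g S + r • z S := by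
  let π : M →ₗ[A] QuotSMulTop r M := Submodule.mkQ _
  have π_eq_zero_iff (x : M) : π x = 0 ↔ ∃ z, x = r • z :=
    (Submodule.Quotient.mk_eq_zero _).trans <| by
      simp [Submodule.mem_smul_pointwise_iff_exists, eq_comm]
  obtain ⟨g', hg'⟩ := hvan (π ∘ b) fun T hT => by
    rw [show differential e y (π ∘ b) T = π (differential e y b T) from
      (map_differential e π y b T).symm]
    exact (π_eq_zero_iff _).2 (hb T hT)
  obtain ⟨g, rfl⟩ : ∃ g : Finset V → M, π ∘ g = g' :=
    (Submodule.mkQ_surjective _).comp_left g'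
  have exists_smul (S : Finset V) : ∃ z, #S = i → b S - differential e y g S = r • z := by
    by_cases hS : #S = i
    · obtain ⟨z, hz⟩ := (π_eq_zero_iff (b S - differential e y g S)).1 <| by
        rw [map_sub, map_differential]
        exact sub_eq_zero.2 (hg' S hS)
      exact ⟨z, fun _ => hz⟩
    · exact ⟨0, fun h => absurd h hS⟩
  choose z hz using exists_smul
  exact ⟨g, z, fun S hS => by rw [← hz S hS, add_sub_cancel]⟩

/-- If `c` is a cocycle, then `r • c = d b`. As `b` is a cocycle modulo `r`, it is `d g + r • z`,
so that `r • c = r • d z` and hence `c = d z`. -/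
lemma CohomologyVanishes.succ_of_quotSMulTop {r : A} {i : ℕ}
    (hr : r ∈ Ideal.span (Set.range y)) (hreg : IsSMulRegular M r)
    (hvan : CohomologyVanishes e y (QuotSMulTop r M) i) : CohomologyVanishes e y M (i + 1) := by
  intro c hc
  obtain ⟨b, hb⟩ := exists_smul_eq_differential hr hc
  obtain ⟨g, z, hgz⟩ := exists_eq_differential_add_smul hvan
    fun T hT => ⟨c T, (hb T hT).symm⟩
  refine ⟨z, fun S hS => hreg ?_⟩
  calc r • c S = differential e y b S := hb S hS
    _ = differential e y (differential e y g + r • z) S := differential_congr e fun v hv => by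
        rw [hgz _ (by rw [card_erase_of_mem hv, hS, Nat.add_sub_cancel]), Pi.add_apply,
          Pi.smul_apply]
    _ = r • differential e y z S := by
        rw [map_add, differential_differential, zero_add, map_smul, Pi.smul_apply]

lemma cohomologyVanishes_of_isWeaklyRegular {rs : List A}
    (hmem : ∀ r ∈ rs, r ∈ Ideal.span (Set.range y)) :
    ∀ (M : Type _) [AddCommGroup M] [Module A M] {i : ℕ},
      RingTheory.Sequence.IsWeaklyRegular M rs → i < rs.length → CohomologyVanishes e y M i := by
  induction rs with
  | nil => exact fun _ _ _ _ _ hi => absurd hi (Nat.not_lt_zero _)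
  | cons r rs ih =>
    intro M _ _ i hreg hi
    rw [RingTheory.Sequence.isWeaklyRegular_cons_iff] at hreg
    have hr := hmem r List.mem_cons_self
    cases i with
    | zero => exact cohomologyVanishes_zero_of_isSMulRegular hr hreg.1
    | succ i =>
      exact (ih (fun s hs => hmem s (List.mem_cons_of_mem r hs)) (QuotSMulTop r M) hreg.2
        (Nat.lt_of_succ_lt_succ hi)).succ_of_quotSMulTop hr hreg.1

end Vanishing

section Localization

variable {V ι R L : Type*} [LinearOrder ι] [DecidableEq V] [CommRing R] [CommRing L] [Algebra R L]

lemma exists_mul_eq_differential_of_isLocalization (N : Submonoid R) [IsLocalization N L]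
    {e : V ↪ ι} {y : V → R} {z : Finset V → R} {b : Finset V → L} (s : Finset (Finset V))
    (hb : ∀ S ∈ s, algebraMap R L (z S) = differential e (algebraMap R L ∘ y) b S) :
    ∃ t ∈ N, ∃ w : Finset V → R, ∀ S ∈ s, t * z S = differential e y w S := by
  obtain ⟨u, hu⟩ := IsLocalization.exist_integer_multiples N
    (s.biUnion fun S => S.image S.erase) b
  choose! w hw using hu
  have exists_mul (S) (hS : S ∈ s) :
      ∃ c : N, (c : R) * ((u : R) * z S) = c * differential e y w S := by
    refine (IsLocalization.eq_iff_exists N L).1 ?_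
    calc algebraMap R L ((u : R) * z S)
        = differential e (algebraMap R L ∘ y) (algebraMap R L u • b) S := by
          rw [map_mul, hb S hS, map_smul, Pi.smul_apply, smul_eq_mul]
      _ = differential e (algebraMap R L ∘ y) (algebraMap R L ∘ w) S :=
          differential_congr e fun v hv => by
            rw [Function.comp_apply (g := w), hw _ (mem_biUnion.2 ⟨S, hS, mem_image_of_mem _ hv⟩),
              Pi.smul_apply, algebraMap_smul]
      _ = algebraMap R L (differential e y w S) :=
          (map_differential e (algebraMap R L).toSemilinearMap y w S).symm
  choose! c hc using exists_mul
  refine ⟨((∏ S ∈ s, c S) * u : N), Subtype.prop _, ((∏ S ∈ s, c S : N) : R) • w, fun S hS => ?_⟩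
  rw [map_smul, Pi.smul_apply, smul_eq_mul, ← mul_prod_erase s c hS]
  push_cast
  linear_combination (∏ S ∈ s.erase S, (c S : R)) * hc S hS

end Localization

end Koszul

/-! ### Simplicial cohomology -/

namespace SComplex

open Koszul

section Faces

variable {V : Type} [DecidableEq V] {K : SComplex V} {F S W : Finset V} {v : V}

lemma ext {L : SComplex V} (h : ∀ S, S ∈ K.faces ↔ S ∈ L.faces) : K = L := by
  cases K
  cases L
  congr
  exact Finset.ext h

lemma mem_link : S ∈ (K.link F).faces ↔ Disjoint F S ∧ F ∪ S ∈ K.faces := by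
  rw [link, mem_filter]
  exact and_iff_right_of_imp fun h => K.down_closed h.2 subset_union_right

lemma mem_link_singleton : S ∈ (K.link {v}).faces ↔ v ∉ S ∧ insert v S ∈ K.faces := by
  rw [mem_link, disjoint_singleton_left, insert_eq]

lemma mem_restrict : S ∈ (K.restrict W).faces ↔ S ∈ K.faces ∧ S ⊆ W := mem_filter

lemma link_link {G : Finset V} (h : Disjoint F G) : (K.link F).link G = K.link (F ∪ G) := by
  refine ext fun S => ?_
  rw [mem_link, mem_link, mem_link, disjoint_union_left, disjoint_union_right, union_assoc]
  tauto

lemma link_empty : K.link ∅ = K :=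
  ext fun S => by rw [mem_link, empty_union, and_iff_right (disjoint_empty_left S)]

/-- The image of a complex under an injection of its vertices. -/
def map {W : Type} [DecidableEq W] (φ : V ↪ W) (K : SComplex V) : SComplex W where
  faces := K.faces.image (Finset.map φ)
  down_closed := by
    intro _ _ hS' hT'
    obtain ⟨S, hS, rfl⟩ := mem_image.1 hS'
    obtain ⟨T, hT, rfl⟩ := subset_map_iff.1 hT'
    exact mem_image_of_mem _ (K.down_closed hS hT)

end Faces

section Vanishing

variable {V : Type} {ι M : Type*} [LinearOrder ι] [DecidableEq V] [AddCommGroup M]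
  {e : V ↪ ι} {K : SComplex V} {W : Finset V} {p : V} {i : ℕ}

/-- The vanishing of `H̃^{i-1}(K; M)`. As in `HVanish`, the index is the cardinality of the
relevant faces. Cochains are defined on all finite sets of vertices, but only their values on the
faces of `K` matter. -/
def CohomologyVanishes (K : SComplex V) (e : V ↪ ι) (M : Type*) [AddCommGroup M] (i : ℕ) : Prop :=
  ∀ c : Finset V → M, (∀ T ∈ K.faces, #T = i + 1 → differential e (1 : V → ℤ) c T = 0) →
    ∃ b, ∀ S ∈ K.faces, #S = i → c S = differential e (1 : V → ℤ) b S

lemma cohomologyVanishes_of_empty_notMem (h : ∅ ∉ K.faces) : K.CohomologyVanishes e M i :=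
  fun _ _ => ⟨0, fun _ hS => absurd (K.down_closed hS (empty_subset _)) h⟩

lemma cohomologyVanishes_zero (hp : {p} ∈ K.faces) : K.CohomologyVanishes e M 0 := by
  intro c hc
  refine ⟨0, fun S _ hS => ?_⟩
  have h := differential_contract_add_contract_differential e (1 : V → ℤ) p c ∅
  rw [contract_eq_zero e fun _ => hc _ hp (card_singleton p), differential_empty, add_zero,
    Pi.one_apply, one_smul] at h
  rw [card_eq_zero.1 hS, differential_empty, h]

lemma cohomologyVanishes_of_cone (p : V) (hp : ∀ S ∈ K.faces, insert p S ∈ K.faces) :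
    K.CohomologyVanishes e M i := by
  intro c hc
  refine ⟨contract e p c, fun S hS hi => ?_⟩
  have h := differential_contract_add_contract_differential e (1 : V → ℤ) p c S
  rw [contract_eq_zero e fun hpS => hc _ (hp S hS) (by rw [card_insert_of_notMem hpS, hi]),
    add_zero, Pi.one_apply, one_smul] at h
  exact h.symm

lemma erase_mem_restrict_link_singleton {T : Finset V}
    (hT : T ∈ (K.restrict (insert p W)).faces) (hpT : p ∈ T) :
    T.erase p ∈ ((K.link {p}).restrict W).faces := by
  obtain ⟨hTK, hTW⟩ := mem_restrict.1 hT
  exact mem_restrict.2 ⟨mem_link_singleton.2 ⟨notMem_erase p T, by rwa [insert_erase hpT]⟩,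
    subset_insert_iff.1 hTW⟩

lemma mem_restrict_of_notMem {T : Finset V} (hT : T ∈ (K.restrict (insert p W)).faces)
    (hpT : p ∉ T) : T ∈ (K.restrict W).faces :=
  mem_restrict.2 ((mem_restrict.1 hT).imp_right (subset_insert_iff_of_notMem hpT).1)

lemma mem_restrict_of_mem_restrict_link {T : Finset V}
    (hT : T ∈ ((K.link {p}).restrict W).faces) : T ∈ (K.restrict W).faces :=
  mem_restrict.2 ((mem_restrict.1 hT).imp_left fun h => (mem_filter.1 h).1)

lemma insert_mem_restrict_of_mem_restrict_link {T : Finset V}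
    (hT : T ∈ ((K.link {p}).restrict W).faces) :
    p ∉ T ∧ insert p T ∈ (K.restrict (insert p W)).faces :=
  have h := mem_link_singleton.1 (mem_restrict.1 hT).1
  ⟨h.1, mem_restrict.2 ⟨h.2, insert_subset_insert p (mem_restrict.1 hT).2⟩⟩

/-- A cocycle `c` on the deletion of `p` equals `d b` on the link of `p`. Correcting by `p ∧ b`
extends it to a cocycle on the whole complex. -/
lemma CohomologyVanishes.restrict_of_insert (hp : p ∉ W)
    (h : (K.restrict (insert p W)).CohomologyVanishes e M i)
    (hlink : ((K.link {p}).restrict W).CohomologyVanishes e M i) :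
    (K.restrict W).CohomologyVanishes e M i := by
  intro c hc
  obtain ⟨b, hb⟩ := hlink c fun T hT => hc T (mem_restrict_of_mem_restrict_link hT)
  let c' : Finset V → M := fun S => if p ∈ S then 0 else c S
  obtain ⟨d, hd⟩ := h (c' + wedge e p b) fun T hT hi => by
    rw [map_add, differential_wedge, Pi.add_apply, Pi.neg_apply]
    by_cases hpT : p ∈ T
    · rw [wedge_of_mem e hpT, ← hb _ (erase_mem_restrict_link_singleton hT hpT)
        (by rw [card_erase_of_mem hpT, hi, Nat.add_sub_cancel]), differential_apply,
        sum_eq_single_of_mem p hpT]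
      · simp [c']
      · intro v _ hvp
        simp [c', hpT, hvp.symm]
    · rw [wedge_of_notMem e hpT, neg_zero, add_zero,
        differential_congr e (z := 1) (d := c) fun v _ => by simp [c', hpT]]
      exact hc T (mem_restrict_of_notMem hT hpT) hi
  refine ⟨d, fun S hS hi => ?_⟩
  obtain ⟨hSK, hSW⟩ := mem_restrict.1 hS
  have hpS : p ∉ S := fun h => hp (hSW h)
  rw [← hd S (mem_restrict.2 ⟨hSK, hSW.trans (subset_insert p W)⟩) hi, Pi.add_apply,
    wedge_of_notMem e hpS, add_zero]
  exact (if_neg hpS).symm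

/-- Subtracting a coboundary, we may assume that the cocycle is zero on the deletion of `p`, and
then it is `p ∧ q` for a cocycle `q` on the link of `p`. -/
lemma CohomologyVanishes.restrict_insert (h : (K.restrict W).CohomologyVanishes e M i)
    (hlink : ∀ j, i = j + 1 → ((K.link {p}).restrict W).CohomologyVanishes e M j) :
    (K.restrict (insert p W)).CohomologyVanishes e M i := by
  intro c hc
  obtain ⟨d, hd⟩ := h c fun T hT => hc T <|
    mem_restrict.2 ((mem_restrict.1 hT).imp_right fun h => h.trans (subset_insert p W))
  cases i with
  | zero =>
    refine ⟨d, fun S hS hi => hd S (mem_restrict_of_notMem hS ?_) hi⟩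
    rw [card_eq_zero.1 hi]
    exact notMem_empty p
  | succ j =>
    set c' : Finset V → M := c - differential e (1 : V → ℤ) d
    have hc' : differential e (1 : V → ℤ) c' = differential e (1 : V → ℤ) c := by
      rw [map_sub, differential_differential, sub_zero]
    obtain ⟨q, hq⟩ := hlink j rfl (contract e p c') fun T hT hi => by
      have homotopy :=
        differential_contract_add_contract_differential e (1 : V → ℤ) p c' T
      obtain ⟨hpT, hpTK⟩ := insert_mem_restrict_of_mem_restrict_link hT
      rwa [hc', contract_eq_zero e fun _ => hc _ hpTK (by rw [card_insert_of_notMem hpT, hi]),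
        add_zero, show c' T = 0 from
          sub_eq_zero.2 (hd T (mem_restrict_of_mem_restrict_link hT) hi), smul_zero] at homotopy
    refine ⟨d - wedge e p q, fun S hS hi => ?_⟩
    rw [map_sub, differential_wedge, sub_neg_eq_add, Pi.add_apply]
    by_cases hpS : p ∈ S
    · rw [wedge_of_mem e hpS, ← hq _ (erase_mem_restrict_link_singleton hS hpS)
        (by rw [card_erase_of_mem hpS, hi, Nat.add_sub_cancel]), ← wedge_of_mem e hpS,
        wedge_contract e hpS]
      exact (add_sub_cancel _ _).symm
    · rw [wedge_of_notMem e hpS, add_zero, hd S (mem_restrict_of_notMem hS hpS) hi]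

lemma cohomologyVanishes_map_iff {W : Type} [DecidableEq W] (φ : V ↪ W) (e : W ↪ ι) :
    (K.map φ).CohomologyVanishes e M i ↔ K.CohomologyVanishes (φ.trans e) M i := by
  have differential_one_map (c : Finset W → M) (T : Finset V) :
      differential e (1 : W → ℤ) c (T.map φ) =
        differential (φ.trans e) (1 : V → ℤ) (c ∘ Finset.map φ) T :=
    differential_map φ e 1 c T
  have extend_comp_map (c : Finset V → M) :
      Function.extend (Finset.map φ) c 0 ∘ Finset.map φ = c :=
    funext fun S => (map_injective φ).extend_apply c 0 S
  constructor
  · intro h c hc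
    obtain ⟨b, hb⟩ := h (Function.extend (Finset.map φ) c 0) fun _ hT' hi => by
      obtain ⟨T, hT, rfl⟩ := mem_image.1 hT'
      rw [differential_one_map, extend_comp_map]
      exact hc T hT (by rwa [card_map] at hi)
    refine ⟨b ∘ Finset.map φ, fun S hS hi => ?_⟩
    rw [← differential_one_map, ← hb _ (mem_image_of_mem _ hS) (by rwa [card_map])]
    exact ((map_injective φ).extend_apply c 0 S).symm
  · intro h c hc
    obtain ⟨b, hb⟩ := h (c ∘ Finset.map φ) fun T hT hi => by
      rw [← differential_one_map]
      exact hc _ (mem_image_of_mem _ hT) (by rwa [card_map])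
    refine ⟨Function.extend (Finset.map φ) b 0, fun _ hS' hi => ?_⟩
    obtain ⟨S, hS, rfl⟩ := mem_image.1 hS'
    rw [differential_one_map, extend_comp_map]
    exact hb S hS (by rwa [card_map] at hi)

section Strip

variable {A B : Finset V}

lemma cohomologyVanishes_restrict_union
    (h : ∀ F ⊆ A, F ∈ K.faces → ∀ i, ((K.link F).restrict B).CohomologyVanishes e M i) (i : ℕ) :
    (K.restrict (A ∪ B)).CohomologyVanishes e M i := by
  induction A using Finset.induction_on generalizing K i with
  | empty =>
    by_cases hK : ∅ ∈ K.faces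
    · simpa only [link_empty, empty_union] using h ∅ subset_rfl hK i
    · exact cohomologyVanishes_of_empty_notMem fun h => hK (mem_restrict.1 h).1
  | insert v A _ ih =>
    rw [insert_union]
    refine .restrict_insert (ih (fun F hF => h F (hF.trans (subset_insert v A))) i) fun j _ =>
      ih (fun F hF hFK => ?_) j
    obtain ⟨hvF, hFK⟩ := mem_link.1 hFK
    rw [link_link hvF]
    exact h _ (union_subset (singleton_subset_iff.2 (mem_insert_self v A))
      (hF.trans (subset_insert v A))) hFK

lemma CohomologyVanishes.restrict_of_union (hAB : Disjoint A B)
    (h : ∀ F ⊆ A, F ∈ K.faces → ((K.link F).restrict (A ∪ B)).CohomologyVanishes e M i) :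
    (K.restrict B).CohomologyVanishes e M i := by
  induction A using Finset.induction_on with
  | empty =>
    by_cases hK : ∅ ∈ K.faces
    · simpa only [link_empty, empty_union] using h ∅ subset_rfl hK
    · exact cohomologyVanishes_of_empty_notMem fun h => hK (mem_restrict.1 h).1
  | insert v A hvA ih =>
    obtain ⟨hvB, hAB⟩ := disjoint_insert_left.1 hAB
    refine ih hAB fun F hF hFK => ?_
    have hvF : Disjoint F {v} := disjoint_singleton_right.2 fun hv => hvA (hF hv)
    refine .restrict_of_insert (p := v) (by simp [hvA, hvB]) ?_ ?_
    · rw [← insert_union]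
      exact h F (hF.trans (subset_insert v A)) hFK
    rw [link_link hvF]
    by_cases hFv : F ∪ {v} ∈ K.faces
    · have restrict_eq : (K.link (F ∪ {v})).restrict (insert v A ∪ B) =
          (K.link (F ∪ {v})).restrict (A ∪ B) := ext fun S => by
        rw [mem_restrict, mem_restrict, insert_union]
        refine and_congr_right fun hS => subset_insert_iff_of_notMem ?_
        exact disjoint_left.1 (mem_link.1 hS).1 (by simp)
      rw [← restrict_eq]
      exact h _ (union_subset (hF.trans (subset_insert v A)) (by simp)) hFv
    · refine cohomologyVanishes_of_empty_notMem fun h => hFv ?_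
      simpa using (mem_link.1 (mem_restrict.1 h).1).2

end Strip

end Vanishing

end SComplex

/-! ### Face primes of Stanley–Reisner rings -/

lemma exists_isRegular_of_lt_depthIn {R : Type} [CommRing R] {I : Ideal R} {n : ℕ}
    (h : n < depthIn R I) :
    ∃ rs : List R, n < rs.length ∧ (∀ r ∈ rs, r ∈ I) ∧ RingTheory.Sequence.IsRegular R rs := by
  obtain ⟨_, ⟨rs, rfl, hrs⟩, hn⟩ := exists_lt_of_lt_csSup' h
  exact ⟨rs, hn, hrs⟩

namespace SComplex

open Koszul MvPolynomial

section FacePrime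

variable {V : Type} [DecidableEq V] (k : Type) [Field k] {K : SComplex V} {F G : Finset V}

/-- The retraction of the polynomial ring onto the face ring of the simplex `F`, sending the
variables outside `F` to zero. -/
noncomputable def killOutside (F : Finset V) : MvPolynomial V k →ₐ[k] MvPolynomial V k :=
  aeval fun v => if v ∈ F then X v else 0

variable {k} in
lemma killOutside_eq_zero_iff {f : MvPolynomial V k} :
    killOutside k F f = 0 ↔ f ∈ Ideal.span (X '' {v : V | v ∉ F}) := by
  set J : Ideal (MvPolynomial V k) := Ideal.span (X '' {v : V | v ∉ F})
  constructor
  · intro hf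
    have mk_killOutside : (Ideal.Quotient.mkₐ k J).comp (killOutside k F) =
        Ideal.Quotient.mkₐ k J := by
      refine algHom_ext fun v => ?_
      by_cases hv : v ∈ F
      · simp [killOutside, hv]
      · have : (X v : MvPolynomial V k) ∈ J := Ideal.subset_span ⟨v, hv, rfl⟩
        simpa [killOutside, hv, eq_comm] using Ideal.Quotient.eq_zero_iff_mem.2 this
    have h := DFunLike.congr_fun mk_killOutside f
    rw [AlgHom.comp_apply, hf, map_zero] at h
    exact Ideal.Quotient.eq_zero_iff_mem.1 h.symm
  · intro hf
    suffices J ≤ RingHom.ker (killOutside k F) from this hf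
    rw [Ideal.span_le]
    rintro _ ⟨v, hv, rfl⟩
    simpa [RingHom.mem_ker, killOutside] using hv

lemma srIdeal_le_ker_killOutside (hF : F ∈ K.faces) :
    srIdeal k K ≤ RingHom.ker (killOutside k F).toRingHom := by
  rw [srIdeal, Ideal.span_le]
  rintro _ ⟨S, hS, rfl⟩
  obtain ⟨v, hvS, hvF⟩ := not_subset.1 fun h => hS (K.down_closed hF h)
  refine (map_prod _ _ _).trans (prod_eq_zero hvS ?_)
  simp [killOutside, hvF]

/-- The prime of the Stanley–Reisner ring generated by the variables outside the face `F`. -/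
noncomputable def facePrime (hF : F ∈ K.faces) : Ideal (SRRing k K) :=
  RingHom.ker (Ideal.Quotient.lift (srIdeal k K) (killOutside k F).toRingHom
    fun _ h => srIdeal_le_ker_killOutside k hF h)

instance (hF : F ∈ K.faces) : (facePrime k hF).IsPrime := RingHom.ker_isPrime _

variable {k} in
lemma mk_mem_facePrime (hF : F ∈ K.faces) {f : MvPolynomial V k} :
    Ideal.Quotient.mk (srIdeal k K) f ∈ facePrime k hF ↔
      f ∈ Ideal.span (X '' {v : V | v ∉ F}) :=
  killOutside_eq_zero_iff

lemma mk_X_mem_facePrime (hF : F ∈ K.faces) {v : V} :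
    Ideal.Quotient.mk (srIdeal k K) (X v) ∈ facePrime k hF ↔ v ∉ F := by
  rw [mk_mem_facePrime, ← killOutside_eq_zero_iff]
  simp [killOutside]

lemma facePrime_lt_facePrime (hF : F ∈ K.faces) (hG : G ∈ K.faces) (h : F ⊂ G) :
    facePrime k hG < facePrime k hF := by
  obtain ⟨v, hvG, hvF⟩ := exists_of_ssubset h
  refine lt_of_le_not_ge (fun f hf => ?_) fun hle =>
    (mk_X_mem_facePrime k hG).1 (hle ((mk_X_mem_facePrime k hF).2 hvF)) hvG
  obtain ⟨f, rfl⟩ := Ideal.Quotient.mk_surjective f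
  rw [mk_mem_facePrime] at hf ⊢
  exact Ideal.span_mono (Set.image_mono fun _ (hv : _ ∉ G) hvF => hv (h.1 hvF)) hf

lemma card_sub_card_le_height_facePrime (hG : G ∈ K.faces) (h : F ⊆ G) :
    ((#G - #F : ℕ) : ℕ∞) ≤ (facePrime k (K.down_closed hG h)).height := by
  induction hm : #G - #F generalizing F with
  | zero => simp
  | succ m ih =>
    obtain ⟨v, hvG, hvF⟩ := exists_mem_notMem_of_card_lt_card (by omega : #F < #G)
    have hvFG : insert v F ⊆ G := insert_subset hvG h
    have ih := ih hvFG (by rw [card_insert_of_notMem hvF]; omega)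
    push_cast
    exact (add_le_add_left ih 1).trans <| Ideal.height_add_one_le_of_lt_of_isPrime <|
      facePrime_lt_facePrime k (K.down_closed hG h) (K.down_closed hG hvFG) (ssubset_insert hvF)

variable {k}

lemma SerreS.lt_depthIn {ℓ i : ℕ} (h : SerreS k ℓ K) (hG : G ∈ K.faces) (hFG : F ⊆ G)
    (hiℓ : i < ℓ) (hi : i + #F < #G) :
    i < depthIn (Localization.AtPrime (facePrime k (K.down_closed hG hFG)))
      (IsLocalRing.maximalIdeal _) := by
  set p := facePrime k (K.down_closed hG hFG)
  have lt_height : (i : ℕ∞) < p.height :=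
    (Nat.cast_lt.2 (by omega : i < #G - #F)).trans_le (card_sub_card_le_height_facePrime k hG hFG)
  have serre := h p inferInstance
  rw [IsLocalization.AtPrime.ringKrullDim_eq_height p] at serre
  exact_mod_cast (lt_min (WithBot.coe_lt_coe.2 (Nat.cast_lt.2 hiℓ))
    (WithBot.coe_lt_coe.2 lt_height)).trans_le serre

end FacePrime

section Monomials

variable {V : Type} {k : Type} [Field k]

/-- The exponent vector of the squarefree monomial supported on `S`. -/
noncomputable def exponent (S : Finset V) : V →₀ ℕ := ∑ v ∈ S, Finsupp.single v 1

lemma prod_X_eq_monomial (S : Finset V) :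
    ∏ v ∈ S, (X v : MvPolynomial V k) = monomial (exponent S) 1 :=
  (monomial_sum_one S fun v => Finsupp.single v 1).symm

lemma support_exponent (S : Finset V) : (exponent S).support = S := by
  classical
  ext v
  simp [exponent, Finsupp.finsetSum_apply, Finsupp.single_apply]

variable [DecidableEq V] {K : SComplex V}

lemma exponent_eq_single_add_erase {S : Finset V} {v : V} (hv : v ∈ S) :
    exponent S = Finsupp.single v 1 + exponent (S.erase v) :=
  (add_sum_erase S _ hv).symm

lemma coeff_eq_zero_of_mem_srIdeal {f : MvPolynomial V k} (hf : f ∈ srIdeal k K) {m : V →₀ ℕ}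
    (hm : m.support ∈ K.faces) : coeff m f = 0 := by
  have hspan : srIdeal k K =
      Ideal.span ((fun m => monomial m 1) '' (exponent '' {S | S ∉ K.faces})) := by
    simp only [srIdeal, prod_X_eq_monomial, Set.image_image]
  by_contra h
  rw [hspan, mem_ideal_span_monomial_image] at hf
  obtain ⟨_, ⟨S, hS, rfl⟩, hSm⟩ := hf m (mem_support_iff.2 h)
  exact hS (K.down_closed hm ((support_exponent S).symm.trans_subset (Finsupp.support_mono hSm)))

end Monomials

section LinkCohomology

variable {V : Type} {ι : Type*} [DecidableEq V] [LinearOrder ι] (k : Type) [Field k]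
  {K : SComplex V} {F : Finset V} {e : V ↪ ι} {i : ℕ}

/-- The variables outside `F`, those in `F` being replaced by zero. Their Koszul cohomology at the
prime of `F` computes the cohomology of the link of `F`. -/
noncomputable def outsideVar (F : Finset V) (v : V) : MvPolynomial V k := if v ∈ F then 0 else X v

variable {k}

/-- The Koszul cochain with values in squarefree monomials attached to a simplicial cochain. -/
noncomputable def monomialCochain (c : Finset V → k) (S : Finset V) : MvPolynomial V k :=
  C (c S) * ∏ v ∈ S, X v

lemma differential_outsideVar_of_disjoint {T : Finset V} (hT : Disjoint F T)
    (w : Finset V → MvPolynomial V k) :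
    differential e (outsideVar k F) w T = differential e (X : V → MvPolynomial V k) w T :=
  differential_congr e fun _ hv => by rw [outsideVar, if_neg (disjoint_right.1 hT hv)]

lemma differential_monomialCochain (c : Finset V → k) (T : Finset V) :
    differential e (X : V → MvPolynomial V k) (monomialCochain c) T =
      monomialCochain (differential e (1 : V → ℤ) c) T := by
  simp only [differential_apply, monomialCochain, map_sum, sum_mul, map_zsmul, Pi.one_apply,
    one_smul, smul_mul_assoc]
  refine sum_congr rfl fun v hv => ?_
  rw [smul_eq_mul, mul_left_comm, mul_prod_erase T _ hv]

lemma differential_outsideVar_monomialCochain_eq_zero {c : Finset V → k}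
    (hc : ∀ S ∉ (K.link F).faces, c S = 0) {T : Finset V} (hT : ¬Disjoint F T) :
    differential e (outsideVar k F) (monomialCochain c) T = 0 := by
  obtain ⟨u, huF, huT⟩ := not_disjoint_iff.1 hT
  rw [differential_apply]
  refine sum_eq_zero fun v _ => ?_
  obtain rfl | hvu := eq_or_ne v u
  · simp [outsideVar, huF]
  · have : T.erase v ∉ (K.link F).faces := fun h =>
      disjoint_left.1 (mem_link.1 h).1 huF (mem_erase.2 ⟨hvu.symm, huT⟩)
    simp [monomialCochain, hc _ this]

lemma map_differential_monomialCochain_eq_zero {A : Type*} [CommRing A]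
    (ψ : MvPolynomial V k →+* A)
    (hψ : ∀ T, Disjoint F T → T ∉ (K.link F).faces → ψ (∏ v ∈ T, X v) = 0)
    {c : Finset V → k} (hc₀ : ∀ S ∉ (K.link F).faces, c S = 0)
    (hc : ∀ T ∈ (K.link F).faces, #T = i + 1 → differential e (1 : V → ℤ) c T = 0)
    {T : Finset V} (hT : #T = i + 1) :
    differential e (ψ ∘ outsideVar k F) (ψ ∘ monomialCochain c) T = 0 := by
  rw [show differential e (ψ ∘ outsideVar k F) (ψ ∘ monomialCochain c) T =
    ψ (differential e (outsideVar k F) (monomialCochain c) T) from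
      (map_differential e ψ.toSemilinearMap _ _ _).symm]
  by_cases hFT : Disjoint F T
  · rw [differential_outsideVar_of_disjoint hFT, differential_monomialCochain, monomialCochain]
    by_cases hTK : T ∈ (K.link F).faces
    · rw [hc T hTK hT, C_0, zero_mul, map_zero]
    · rw [map_mul, hψ T hFT hTK, mul_zero]
  · rw [differential_outsideVar_monomialCochain_eq_zero hc₀ hFT, map_zero]

lemma algebraMap_prod_X_eq_zero (hF : F ∈ K.faces) {A : Type*} [CommRing A]
    [Algebra (SRRing k K) A] [IsLocalization.AtPrime A (facePrime k hF)] {T : Finset V}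
    (hFT : Disjoint F T) (hT : T ∉ (K.link F).faces) :
    algebraMap (SRRing k K) A (Ideal.Quotient.mk _ (∏ v ∈ T, X v)) = 0 := by
  have isUnit : IsUnit (algebraMap (SRRing k K) A (Ideal.Quotient.mk _ (∏ v ∈ F, X v))) := by
    refine IsLocalization.map_units A (⟨_, ?_⟩ : (facePrime k hF).primeCompl)
    rw [Ideal.mem_primeCompl_iff, map_prod, Ideal.IsPrime.prod_mem_iff]
    rintro ⟨v, hvF, hv⟩
    exact (mk_X_mem_facePrime k hF).1 hv hvF
  refine isUnit.mul_right_eq_zero.1 ?_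
  rw [← map_mul, ← map_mul, ← prod_union hFT]
  have : ∏ v ∈ F ∪ T, (X v : MvPolynomial V k) ∈ srIdeal k K :=
    Ideal.subset_span ⟨_, fun h => hT (mem_link.2 ⟨hFT, h⟩), rfl⟩
  rw [Ideal.Quotient.eq_zero_iff_mem.2 this, map_zero]

lemma exists_mk_mul_monomialCochain_eq (hF : F ∈ K.faces) {A : Type*} [CommRing A]
    [Algebra (SRRing k K) A] [IsLocalization.AtPrime A (facePrime k hF)]
    (h : Koszul.CohomologyVanishes e
      (algebraMap (SRRing k K) A ∘ Ideal.Quotient.mk _ ∘ outsideVar k F) A i)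
    {c : Finset V → k} (hc₀ : ∀ S ∉ (K.link F).faces, c S = 0)
    (hc : ∀ T ∈ (K.link F).faces, #T = i + 1 → differential e (1 : V → ℤ) c T = 0) :
    ∃ t : MvPolynomial V k, Ideal.Quotient.mk (srIdeal k K) t ∉ facePrime k hF ∧
      ∃ w : Finset V → MvPolynomial V k, ∀ S ∈ (K.link F).faces, #S = i →
        t * monomialCochain c S - differential e (outsideVar k F) w S ∈ srIdeal k K := by
  let mk := Ideal.Quotient.mk (srIdeal k K)
  obtain ⟨b, hb⟩ := h (algebraMap (SRRing k K) A ∘ mk ∘ monomialCochain c) fun T hT =>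
    map_differential_monomialCochain_eq_zero ((algebraMap (SRRing k K) A).comp mk)
      (fun _ => algebraMap_prod_X_eq_zero hF) hc₀ hc hT
  obtain ⟨t', ht, w', hw⟩ := exists_mul_eq_differential_of_isLocalization
    (facePrime k hF).primeCompl {S ∈ (K.link F).faces | #S = i}
    fun S hS => hb S (mem_filter.1 hS).2
  obtain ⟨t, rfl⟩ := Ideal.Quotient.mk_surjective t'
  obtain ⟨w, rfl⟩ : ∃ w : Finset V → MvPolynomial V k, mk ∘ w = w' :=
    Ideal.Quotient.mk_surjective.comp_left w'
  refine ⟨t, ht, w, fun S hS hi => Ideal.Quotient.eq.1 ?_⟩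
  rw [map_mul]
  exact (hw S (mem_filter.2 ⟨hS, hi⟩)).trans (map_differential e mk.toSemilinearMap _ w S).symm

lemma coeff_differential_X (m : V →₀ ℕ) (w : Finset V → MvPolynomial V k) (S : Finset V) :
    coeff (m + exponent S) (differential e (X : V → MvPolynomial V k) w S) =
      differential e (1 : V → ℤ) (fun T => coeff (m + exponent T) (w T)) S := by
  rw [differential_apply, differential_apply, coeff_sum]
  refine sum_congr rfl fun v hv => ?_
  rw [coeff_smul, smul_eq_mul, exponent_eq_single_add_erase hv, add_left_comm, coeff_X_mul,
    Pi.one_apply, one_smul]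

/-- The primitive of `c` is read off from the coefficients of `w` at the multiples of a monomial
of `t` supported in `F`. -/
lemma exists_eq_differential_of_mk_notMem_facePrime (hF : F ∈ K.faces) {t : MvPolynomial V k}
    (ht : Ideal.Quotient.mk (srIdeal k K) t ∉ facePrime k hF)
    {c : Finset V → k} {w : Finset V → MvPolynomial V k}
    (hw : ∀ S ∈ (K.link F).faces, #S = i →
      t * monomialCochain c S - differential e (outsideVar k F) w S ∈ srIdeal k K) :
    ∃ b : Finset V → k, ∀ S ∈ (K.link F).faces, #S = i →
      c S = differential e (1 : V → ℤ) b S := by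
  rw [mk_mem_facePrime, mem_ideal_span_X_image] at ht
  push Not at ht
  obtain ⟨a, ha, haF⟩ := ht
  let b : Finset V → k := fun S => coeff (a + exponent S) (w S)
  refine ⟨AddMonoidHom.mulLeft (coeff a t)⁻¹ ∘ b, fun S hS hi => ?_⟩
  have hFS := mem_link.1 hS
  have support_mem : (a + exponent S).support ∈ K.faces := by
    refine K.down_closed hFS.2 (Finsupp.support_add.trans (union_subset_union (fun v hv => ?_)
      (support_exponent S).subset))
    by_contra hvF
    exact Finsupp.mem_support_iff.1 hv (haF v hvF)
  have coeff_mul_eq : coeff a t * c S = differential e (1 : V → ℤ) b S := by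
    have h := coeff_eq_zero_of_mem_srIdeal (hw S hS hi) support_mem
    rwa [coeff_sub, sub_eq_zero, monomialCochain, mul_left_comm, coeff_C_mul, prod_X_eq_monomial,
      coeff_mul_monomial, mul_one, mul_comm, differential_outsideVar_of_disjoint hFS.1,
      coeff_differential_X] at h
  calc c S = (coeff a t)⁻¹ * differential e (1 : V → ℤ) b S := by
        rw [← coeff_mul_eq, inv_mul_cancel_left₀ (mem_support_iff.1 ha)]
    _ = differential e (1 : V → ℤ) (AddMonoidHom.mulLeft (coeff a t)⁻¹ ∘ b) S :=
        map_differential e (AddMonoidHom.mulLeft (coeff a t)⁻¹).toIntLinearMap 1 b S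

lemma cohomologyVanishes_link_of_koszul (hF : F ∈ K.faces) {A : Type*} [CommRing A]
    [Algebra (SRRing k K) A] [IsLocalization.AtPrime A (facePrime k hF)]
    (h : Koszul.CohomologyVanishes e
      (algebraMap (SRRing k K) A ∘ Ideal.Quotient.mk _ ∘ outsideVar k F) A i) :
    (K.link F).CohomologyVanishes e k i := by
  intro c hc
  let c' : Finset V → k := fun S => if S ∈ (K.link F).faces then c S else 0
  obtain ⟨t, ht, w, hw⟩ := exists_mk_mul_monomialCochain_eq hF h (c := c')
    (fun S hS => if_neg hS) fun T hT hi => by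
      rw [← hc T hT hi]
      refine differential_congr e fun v _ => ?_
      simp [c', (K.link F).down_closed hT (erase_subset v T)]
  obtain ⟨b, hb⟩ := exists_eq_differential_of_mk_notMem_facePrime hF ht hw
  exact ⟨b, fun S hS hi => (if_pos hS).symm.trans (hb S hS hi)⟩

lemma facePrime_le_span (hF : F ∈ K.faces) :
    facePrime k hF ≤ Ideal.span (Set.range (Ideal.Quotient.mk _ ∘ outsideVar k F)) := by
  intro f hf
  obtain ⟨f, rfl⟩ := Ideal.Quotient.mk_surjective f
  rw [Set.range_comp, ← Ideal.map_span]
  refine Ideal.mem_map_of_mem _ (Ideal.span_mono ?_ ((mk_mem_facePrime hF).1 hf))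
  rintro _ ⟨v, hv, rfl⟩
  exact ⟨v, if_neg hv⟩

lemma SerreS.cohomologyVanishes_link {G : Finset V} {ℓ : ℕ} (h : SerreS k ℓ K)
    (hG : G ∈ K.faces) (hFG : F ⊆ G) (hiℓ : i < ℓ) (hi : i + #F < #G) :
    (K.link F).CohomologyVanishes e k i := by
  have hF := K.down_closed hG hFG
  obtain ⟨rs, hlen, hmem, hreg⟩ := exists_isRegular_of_lt_depthIn (h.lt_depthIn hG hFG hiℓ hi)
  refine cohomologyVanishes_link_of_koszul (A := Localization.AtPrime (facePrime k hF)) hF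
    (cohomologyVanishes_of_isWeaklyRegular (fun r hr => ?_) _ hreg.toIsWeaklyRegular hlen)
  rw [Set.range_comp, ← Ideal.map_span]
  have hr := hmem r hr
  rw [← Localization.AtPrime.map_eq_maximalIdeal] at hr
  exact Ideal.map_mono (facePrime_le_span hF) hr

end LinkCohomology

end SComplex

/-! ### Homology from cohomology -/

namespace SComplex

open Koszul

section Duality

variable {V : Type} [DecidableEq V] {k : Type} [Field k] {K : SComplex V} {i : ℕ}

/-- The functional on the chains of `K` given by evaluating a simplicial cochain. -/
noncomputable def pairing (K : SComplex V) (n : ℕ) (c : Finset V → k) : ChainsOf k K n →ₗ[k] k :=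
  Finsupp.linearCombination k fun S : Faces K n => c S.1

lemma pairing_single (n : ℕ) (c : Finset V → k) (S : Faces K n) :
    pairing K n c (Finsupp.single S 1) = c S.1 := by
  rw [pairing, Finsupp.linearCombination_single, one_smul]

lemma pairing_eq_pairing_iff {n : ℕ} {c d : Finset V → k} :
    pairing K n c = pairing K n d ↔ ∀ S ∈ K.faces, #S = n → c S = d S := by
  constructor
  · intro h S hS hn
    let S' : Faces K n := ⟨S, hS, hn⟩
    calc c S = pairing K n c (Finsupp.single S' 1) := (pairing_single n c S').symm
      _ = pairing K n d (Finsupp.single S' 1) := by rw [h]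
      _ = d S := pairing_single n d S'
  · intro h
    refine Finsupp.lhom_ext' fun S => LinearMap.ext_ring ?_
    rw [LinearMap.comp_apply, LinearMap.comp_apply, Finsupp.lsingle_apply, pairing_single,
      pairing_single, h S.1 S.2.1 S.2.2]

lemma exists_pairing_eq {n : ℕ} (f : ChainsOf k K n →ₗ[k] k) : ∃ c, pairing K n c = f := by
  refine ⟨fun S => if h : S ∈ K.faces ∧ #S = n then f (Finsupp.single ⟨S, h⟩ 1) else 0,
    Finsupp.lhom_ext' fun S => LinearMap.ext_ring ?_⟩
  rw [LinearMap.comp_apply, LinearMap.comp_apply, Finsupp.lsingle_apply, pairing_single]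
  exact dif_pos S.2

/-- The vertex numbering underlying `arbOrder`. -/
noncomputable def numbering (V : Type) [Fintype V] : V ↪ Fin (Fintype.card V) :=
  (Fintype.equivFin V).toEmbedding

variable {ι : Type*} [LinearOrder ι] [Fintype V] {e : V ↪ ι}

lemma pairing_comp_bd (he : ∀ v w, e v < e w ↔ numbering V v < numbering V w) (n : ℕ)
    (c : Finset V → k) :
    (pairing K (n - 1) c).comp (bd k K n) = pairing K n (differential e (1 : V → ℤ) c) := by
  refine Finsupp.lhom_ext' fun S => LinearMap.ext_ring ?_
  rw [LinearMap.comp_apply, LinearMap.comp_apply, LinearMap.comp_apply, Finsupp.lsingle_apply,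
    pairing_single, bd, Finsupp.lsum_single, LinearMap.toSpanSingleton_apply, one_smul,
    differential_apply, ← sum_attach]
  refine (map_sum _ _ _).trans (sum_congr rfl fun v _ => ?_)
  refine ((map_smul _ _ _).trans (congrArg _ (pairing_single _ c _))).trans ?_
  simp only [sign, he, Pi.one_apply, one_smul, zsmul_eq_mul, smul_eq_mul]
  push_cast
  rfl

lemma CohomologyVanishes.hVanish (he : ∀ v w, e v < e w ↔ numbering V v < numbering V w)
    (h : K.CohomologyVanishes e k i) : HVanish k K i := by
  intro z hz
  by_contra hz'
  obtain ⟨f, hfz, hf⟩ := Submodule.exists_le_ker_of_notMem hz'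
  obtain ⟨c, rfl⟩ := exists_pairing_eq f
  have cocycle : pairing K (i + 1) (differential e (1 : V → ℤ) c) = pairing K (i + 1) 0 := by
    rw [← pairing_comp_bd he]
    exact (LinearMap.range_le_ker_iff.1 hf).trans (Finsupp.linearCombination_zero ..).symm
  obtain ⟨b, hb⟩ := h c (pairing_eq_pairing_iff.1 cocycle)
  rw [pairing_eq_pairing_iff.2 hb, ← pairing_comp_bd he, LinearMap.comp_apply,
    LinearMap.mem_ker.1 hz, map_zero] at hfz
  exact hfz rfl

end Duality

/-! ### Purity -/

section Purity

variable {V : Type} {ι M : Type*} [DecidableEq V] [LinearOrder ι] [AddCommGroup M] {e : V ↪ ι}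
  {K : SComplex V} {F A B : Finset V}

lemma sign_pair {v w : V} (hvw : v ≠ w) : sign e v {v, w} = -sign e w {v, w} := by
  have h := sign_insert_mul_sign e hvw (notMem_empty v) (notMem_empty w)
  have sign_empty (u : V) : sign e u ∅ = 1 := by simp [sign]
  rw [sign_empty, sign_empty, mul_one, mul_one] at h
  rw [sign_insert_self, pair_comm, sign_insert_self]
  exact h

lemma differential_pair {v w : V} (hvw : v ≠ w) (c : Finset V → M) :
    differential e (1 : V → ℤ) c {v, w} = sign e v {v, w} • (c {w} - c {v}) := by
  rw [differential_apply, sum_pair hvw, erase_insert (notMem_singleton.2 hvw), pair_comm v w,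
    erase_insert (notMem_singleton.2 hvw.symm), pair_comm w v, sign_pair hvw]
  simp [sub_eq_add_neg, add_comm]

lemma CohomologyVanishes.of_adjacent [Nontrivial M] (h : K.CohomologyVanishes e M 1)
    {q : V → Prop} (hq : ∀ v w, {v, w} ∈ K.faces → q v → q w) {v w : V} (hv : {v} ∈ K.faces)
    (hw : {w} ∈ K.faces) (hqv : q v) : q w := by
  classical
  obtain ⟨m, hm⟩ := exists_ne (0 : M)
  let c : Finset V → M := fun S => if ∃ u ∈ S, q u then m else 0
  obtain ⟨b, hb⟩ := h c fun T hT hcard => by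
    obtain ⟨x, y, hxy, rfl⟩ := card_eq_two.1 hcard
    have : q x ↔ q y := ⟨hq x y hT, hq y x (pair_comm x y ▸ hT)⟩
    simp [differential_pair hxy, c, this]
  have eq_apply_empty {u : V} (hu : {u} ∈ K.faces) : c {u} = b ∅ := by
    simp [hb _ hu (card_singleton u), differential_apply, sign, filter_singleton]
  have : c {w} = c {v} := (eq_apply_empty hw).trans (eq_apply_empty hv).symm
  simpa [c, hqv, hm.symm] using this

lemma exists_isFacet_superset (hF : F ∈ K.faces) : ∃ G, K.IsFacet G ∧ F ⊆ G := by
  obtain ⟨G, hFG, hG⟩ := K.faces.exists_le_maximal hF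
  exact ⟨G, ⟨hG.prop, fun H hH hGH => hGH.antisymm (hG.2 hH hGH)⟩, hFG⟩

lemma singleton_mem_link {v : V} (hv : v ∉ F) : {v} ∈ (K.link F).faces ↔ insert v F ∈ K.faces := by
  rw [mem_link, disjoint_singleton_right, and_iff_right hv, union_singleton]

lemma CohomologyVanishes.card_eq_of_isFacet [Nontrivial M]
    (h : (K.link F).CohomologyVanishes e M 1) {n : ℕ}
    (hn : ∀ v ∉ F, ∀ C D, K.IsFacet C → K.IsFacet D → insert v F ⊆ C → insert v F ⊆ D →
      #C = n → #D = n)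
    {a b : V} (ha : a ∉ F) (hb : b ∉ F) (hA : K.IsFacet A) (hB : K.IsFacet B)
    (haA : insert a F ⊆ A) (hbB : insert b F ⊆ B) (hAn : #A = n) : #B = n := by
  obtain ⟨C, hC, hbC, hCn⟩ := h.of_adjacent
    (q := fun v => ∃ C, K.IsFacet C ∧ insert v F ⊆ C ∧ #C = n) (fun v w hvw hv => by
      obtain ⟨C, hC, hvC, hCn⟩ := hv
      obtain ⟨hF, hvw⟩ := mem_link.1 hvw
      obtain ⟨D, hD, hvwD⟩ := exists_isFacet_superset hvw
      have insert_subset_D {u : V} (hu : u ∈ ({v, w} : Finset V)) : insert u F ⊆ D :=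
        insert_subset (hvwD (mem_union_right F hu)) (subset_union_left.trans hvwD)
      exact ⟨D, hD, insert_subset_D (by simp), hn v (disjoint_right.1 hF (by simp)) C D hC hD hvC
        (insert_subset_D (by simp)) hCn⟩)
    ((singleton_mem_link ha).2 (K.down_closed hA.1 haA))
    ((singleton_mem_link hb).2 (K.down_closed hB.1 hbB)) ⟨A, hA, haA, hAn⟩
  exact hn b hb C B hC hB hbC hbB hCn

lemma card_eq_card_of_isFacet [Nontrivial M]
    (h : ∀ F G, G ∈ K.faces → F ⊆ G → 1 + #F < #G → (K.link F).CohomologyVanishes e M 1)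
    (hA : K.IsFacet A) (hB : K.IsFacet B) (hFA : F ⊆ A) (hFB : F ⊆ B) : #A = #B := by
  induction hn : #A - #F generalizing F A B with
  | zero =>
    obtain rfl : F = A := eq_of_subset_of_card_le hFA (by omega)
    rw [hA.2 B hB.1 hFB]
  | succ n ih =>
    obtain ⟨a, haA, haF⟩ := exists_mem_notMem_of_card_lt_card (by omega : #F < #A)
    obtain rfl | hFB' := hFB.eq_or_ssubset
    · rw [hB.2 A hA.1 hFA]
    obtain ⟨b, hbB, hbF⟩ := exists_of_ssubset hFB'
    by_contra hAB
    have connected : (K.link F).CohomologyVanishes e M 1 := by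
      by_cases hcard : 1 + #F < #A
      · exact h F A hA.1 hFA hcard
      · exact h F B hB.1 hFB (by have := card_lt_card hFB'; omega)
    have card_eq (v : V) (hvF : v ∉ F) (C D : Finset V) (hC : K.IsFacet C) (hD : K.IsFacet D)
        (hvC : insert v F ⊆ C) (hvD : insert v F ⊆ D) (hCA : #C = #A) : #D = #A :=
      (ih hC hD hvC hvD (by rw [card_insert_of_notMem hvF]; omega)).symm.trans hCA
    exact hAB (connected.card_eq_of_isFacet card_eq haF hbF hA hB (insert_subset haA hFA)
      (insert_subset hbB hFB) rfl).symm

lemma exists_card_eq_rank (h : K.faces.Nonempty) : ∃ G ∈ K.faces, #G = K.rank := by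
  obtain ⟨G, hG, hGrank⟩ := exists_mem_eq_sup K.faces h card
  exact ⟨G, hG, hGrank.symm⟩

variable {k : Type} [Field k] {ℓ : ℕ}

lemma SerreS.pure (h : SerreS k ℓ K) (e : V ↪ ι) (hℓ : 1 < ℓ) : K.Pure := by
  intro A hA
  obtain ⟨G, hG, hGrank⟩ := exists_card_eq_rank ⟨A, hA.1⟩
  obtain ⟨B, hB, hGB⟩ := exists_isFacet_superset hG
  have card_eq : #A = #B := card_eq_card_of_isFacet
    (fun F G hG hFG hcard => h.cohomologyVanishes_link (e := e) hG hFG hℓ hcard)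
    hA hB (empty_subset A) (empty_subset B)
  exact le_antisymm (le_sup (f := card) hA.1) (hGrank ▸ card_eq ▸ card_le_card hGB)

lemma SerreS.cohomologyVanishes_link_of_lt_rank (h : SerreS k ℓ K) {i : ℕ} (hi₀ : 0 < i)
    (hiℓ : i < ℓ) (hF : F ∈ K.faces) (hi : i + #F < K.rank) :
    (K.link F).CohomologyVanishes e k i := by
  obtain ⟨A, hA, hFA⟩ := exists_isFacet_superset hF
  exact h.cohomologyVanishes_link hA.1 hFA hiℓ (h.pure e (by omega) A hA ▸ hi)

end Purity

end SComplex

/-! ### Truncations of order complexes -/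

section OrderComplex

open SComplex

variable {P : Type} [DecidableEq P] [Fintype P] [PartialOrder P] [∀ a b : P, Decidable (a ≤ b)]
  {p : P} {C S Q : Finset P}

attribute [local instance] decidableLTOfDecidableLE

lemma mem_orderComplex :
    C ∈ (orderComplex P).faces ↔ ∀ a ∈ C, ∀ b ∈ C, a ≤ b ∨ b ≤ a := by
  simp [orderComplex]

lemma singleton_mem_orderComplex (p : P) : {p} ∈ (orderComplex P).faces := by
  simp [mem_orderComplex]

lemma union_mem_orderComplex :
    C ∪ S ∈ (orderComplex P).faces ↔ C ∈ (orderComplex P).faces ∧ S ∈ (orderComplex P).faces ∧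
      ∀ a ∈ C, ∀ b ∈ S, a ≤ b ∨ b ≤ a := by
  simp only [mem_orderComplex, forall_mem_union]
  grind

lemma insert_mem_orderComplex :
    insert p S ∈ (orderComplex P).faces ↔
      S ∈ (orderComplex P).faces ∧ ∀ a ∈ S, p ≤ a ∨ a ≤ p := by
  rw [insert_eq, union_mem_orderComplex, and_iff_right (singleton_mem_orderComplex p)]
  simp only [mem_singleton, forall_eq]

lemma card_le_pheight (hC : C ∈ (orderComplex P).faces) (hp : p ∈ C) (hle : ∀ a ∈ C, a ≤ p) :
    #C ≤ pheight p :=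
  le_sup (f := card) (mem_filter.2 ⟨mem_univ _, hp, hle, mem_orderComplex.1 hC⟩)

lemma exists_card_eq_pheight (p : P) :
    ∃ C ∈ (orderComplex P).faces, p ∈ C ∧ (∀ a ∈ C, a ≤ p) ∧ #C = pheight p := by
  obtain ⟨C, hC, hcard⟩ := exists_mem_eq_sup (univ.filter fun C : Finset P =>
    p ∈ C ∧ (∀ a ∈ C, a ≤ p) ∧ ∀ a ∈ C, ∀ b ∈ C, a ≤ b ∨ b ≤ a) ⟨{p}, by simp⟩ card
  obtain ⟨hp, hle, hC⟩ := (mem_filter.1 hC).2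
  exact ⟨C, mem_orderComplex.2 hC, hp, hle, hcard.symm⟩

lemma pheight_strictMono : StrictMono (pheight : P → ℕ) := by
  intro a b hab
  obtain ⟨C, hC, -, hle, hcard⟩ := exists_card_eq_pheight a
  have hlt (x : P) (hx : x ∈ C) : x < b := (hle x hx).trans_lt hab
  have hbC : b ∉ C := fun hb => (hlt b hb).false
  calc pheight a < #(insert b C) := by rw [card_insert_of_notMem hbC, hcard]; exact lt_add_one _
    _ ≤ pheight b := card_le_pheight
        (insert_mem_orderComplex.2 ⟨hC, fun x hx => .inr (hlt x hx).le⟩) (mem_insert_self b C)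
        (forall_mem_insert _ _ _ |>.2 ⟨le_rfl, fun x hx => (hlt x hx).le⟩)

lemma exists_rank_le_pheight (h : 0 < (orderComplex P).rank) :
    ∃ p : P, (orderComplex P).rank ≤ pheight p := by
  obtain ⟨C, hC, hcard⟩ := exists_card_eq_rank (K := orderComplex P) ⟨∅, by simp [mem_orderComplex]⟩
  obtain ⟨p, hp, hmax⟩ := C.exists_maximal (card_pos.1 (hcard ▸ h))
  exact ⟨p, hcard ▸ card_le_pheight hC hp fun a ha =>
    (mem_orderComplex.1 hC a ha p hp).elim id (hmax ha)⟩

lemma exists_link_orderComplex_eq_restrict (p : P) :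
    ∃ C ∈ (orderComplex P).faces, #C = pheight p ∧
      (orderComplex P).link C = (orderComplex P).restrict {x | p < x} := by
  obtain ⟨C, hC, hpC, hle, hcard⟩ := exists_card_eq_pheight p
  refine ⟨C, hC, hcard, SComplex.ext fun S => ?_⟩
  rw [mem_link, mem_restrict, union_mem_orderComplex]
  constructor
  · rintro ⟨hCS, -, hS, hcomp⟩
    refine ⟨hS, fun x hx => mem_filter.2 ⟨mem_univ x, ?_⟩⟩
    have hxC : x ∉ C := disjoint_right.1 hCS hx
    have not_le : ¬x ≤ p := fun hxp => by
      have := card_le_pheight (insert_mem_orderComplex.2 ⟨hC, fun a ha => (hcomp a ha x hx).symm⟩)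
        (mem_insert_of_mem hpC) (forall_mem_insert _ _ _ |>.2 ⟨hxp, hle⟩)
      rw [card_insert_of_notMem hxC] at this
      omega
    exact ((hcomp p hpC x hx).resolve_right not_le).lt_of_not_ge not_le
  · rintro ⟨hS, hpS⟩
    have hlt (a : P) (ha : a ∈ C) (x : P) (hx : x ∈ S) : a < x :=
      (hle a ha).trans_lt (mem_filter.1 (hpS hx)).2
    exact ⟨disjoint_left.2 fun x hxC hxS => (hlt x hxC x hxS).false, hC, hS,
      fun a ha x hx => .inl (hlt a ha x hx).le⟩

lemma restrict_link_singleton_orderComplex_eq (hp : p ∉ Q) (hQ : IsUpperSet (Q : Set P))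
    (hpQ : ∀ x, p < x → x ∈ Q) :
    ((orderComplex P).link {p}).restrict Q = (orderComplex P).restrict {x | p < x} := by
  refine SComplex.ext fun S => ?_
  rw [mem_restrict, mem_restrict, mem_link_singleton, insert_mem_orderComplex]
  constructor
  · rintro ⟨⟨hpS, hS, hcomp⟩, hSQ⟩
    refine ⟨hS, fun x hx => mem_filter.2 ⟨mem_univ x, ?_⟩⟩
    exact ((hcomp x hx).resolve_right fun hxp => hp (hQ hxp (hSQ hx))).lt_of_ne
      (ne_of_mem_of_not_mem hx hpS).symm
  · rintro ⟨hS, hlt⟩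
    have hlt (x : P) (hx : x ∈ S) : p < x := (mem_filter.1 (hlt hx)).2
    exact ⟨⟨fun hpS => (hlt p hpS).false, hS, fun x hx => .inl (hlt x hx).le⟩,
      fun x hx => hpQ x (hlt x hx)⟩

namespace SComplex

variable {ι M : Type*} [LinearOrder ι] [AddCommGroup M] {e : P ↪ ι} {i : ℕ}

lemma CohomologyVanishes.restrict_of_isUpperSet (h : (orderComplex P).CohomologyVanishes e M i)
    (hQ : IsUpperSet (Q : Set P))
    (hQc : ∀ p ∉ Q, ((orderComplex P).restrict {x | p < x}).CohomologyVanishes e M i) :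
    ((orderComplex P).restrict Q).CohomologyVanishes e M i := by
  induction hn : #Qᶜ generalizing Q with
  | zero =>
    obtain rfl : Q = univ := by rwa [card_eq_zero, compl_eq_empty_iff] at hn
    rwa [show (orderComplex P).restrict univ = orderComplex P from
      SComplex.ext fun S => by simp [mem_restrict]]
  | succ n ih =>
    obtain ⟨p, hp, hmax⟩ := Qᶜ.exists_maximal (card_pos.1 (by omega))
    have hpQ : p ∉ Q := mem_compl.1 hp
    have mem_of_lt (x : P) (hx : p < x) : x ∈ Q := by
      by_contra hxQ
      exact (hmax (mem_compl.2 hxQ) hx.le).not_gt hx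
    refine restrict_of_insert hpQ (ih ?_ ?_ ?_) ?_
    · intro a b hab ha
      rcases mem_insert.1 ha with rfl | ha
      · exact mem_insert.2 (hab.eq_or_lt.imp Eq.symm (mem_of_lt b))
      · exact mem_insert_of_mem (hQ hab ha)
    · exact fun q hq => hQc q fun h => hq (mem_insert_of_mem h)
    · rw [compl_insert, card_erase_of_mem hp, hn, Nat.add_sub_cancel]
    · rw [restrict_link_singleton_orderComplex_eq hpQ hQ mem_of_lt]
      exact hQc p hpQ

variable {k : Type} [Field k] {ℓ j : ℕ}

lemma SerreS.hVanish_ocAbove (h : SerreS k ℓ (orderComplex P))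
    (hij : i + j < (orderComplex P).rank) (hiℓ : i < ℓ) : HVanish k (ocAbove P j) i := by
  refine CohomologyVanishes.hVanish (e := numbering P) (fun _ _ => Iff.rfl) ?_
  obtain rfl | hi := i.eq_zero_or_pos
  · obtain ⟨p, hp⟩ := exists_rank_le_pheight (P := P) (by omega)
    refine cohomologyVanishes_zero (p := p)
      (mem_restrict.2 ⟨singleton_mem_orderComplex p, singleton_subset_iff.2 ?_⟩)
    exact mem_filter.2 ⟨mem_univ p, by omega⟩
  have link_vanishes (C : Finset P) (hC : C ∈ (orderComplex P).faces) (hCj : #C ≤ j) :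
      ((orderComplex P).link C).CohomologyVanishes (numbering P) k i :=
    h.cohomologyVanishes_link_of_lt_rank hi hiℓ hC (by omega)
  refine CohomologyVanishes.restrict_of_isUpperSet ?_ ?_ fun p hp => ?_
  · simpa only [link_empty] using link_vanishes ∅ (by simp [mem_orderComplex]) (by simp)
  · intro p q hpq hp
    simp only [coe_filter, mem_univ, true_and, Set.mem_ofPred_eq] at hp ⊢
    exact hp.trans_le (pheight_strictMono.monotone hpq)
  · obtain ⟨C, hC, hcard, hlink⟩ := exists_link_orderComplex_eq_restrict p
    rw [← hlink]
    exact link_vanishes C hC (hcard.trans_le (by simpa using hp))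

end SComplex

end OrderComplex

/-! ### Truncations of face posets -/

namespace SComplex

section FacePoset

variable {V : Type} {ι M : Type*} [DecidableEq V] [LinearOrder ι] [AddCommGroup M] {K : SComplex V}
  {C : Finset (Finset V)} {S : Finset (V ⊕ Finset V)} {F G : Finset V} {i j : ℕ}

lemma mem_trunc : C ∈ (K.trunc j).faces ↔
    C ⊆ K.faces ∧ (∀ G ∈ C, j < #G) ∧ ∀ G ∈ C, ∀ H ∈ C, G ⊆ H ∨ H ⊆ G := by
  rw [trunc, mem_filter, mem_powerset]

/-- The mapping cylinder of the barycentric subdivision of `K`. A face consists of a face `F` of `K`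
and a chain of nonempty faces of `K` which contain `F`. -/
def subdivCylinder (K : SComplex V) : SComplex (V ⊕ Finset V) where
  faces := ((K.faces ×ˢ (K.trunc 0).faces).filter fun p => ∀ G ∈ p.2, p.1 ⊆ G).image
    fun p => p.1.disjSum p.2
  down_closed := by
    intro _ T hS hT
    obtain ⟨⟨F, C⟩, h, rfl⟩ := mem_image.1 hS
    obtain ⟨hK, hFC⟩ := mem_filter.1 h
    obtain ⟨hF, hC⟩ := mem_product.1 hK
    have hTF : T.toLeft ⊆ F := (toLeft_subset_toLeft hT).trans_eq toLeft_disjSum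
    have hTC : T.toRight ⊆ C := (toRight_subset_toRight hT).trans_eq toRight_disjSum
    refine mem_image.2 ⟨(T.toLeft, T.toRight), mem_filter.2 ⟨mem_product.2
      ⟨K.down_closed hF hTF, (K.trunc 0).down_closed hC hTC⟩, fun G hG => ?_⟩,
      toLeft_disjSum_toRight⟩
    exact hTF.trans (hFC G (hTC hG))

lemma mem_subdivCylinder : S ∈ K.subdivCylinder.faces ↔
    S.toLeft ∈ K.faces ∧ S.toRight ∈ (K.trunc 0).faces ∧ ∀ G ∈ S.toRight, S.toLeft ⊆ G := by
  simp only [subdivCylinder, mem_image, mem_filter, mem_product, Prod.exists]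
  constructor
  · rintro ⟨F, C, ⟨⟨hF, hC⟩, hFC⟩, rfl⟩
    simpa only [toLeft_disjSum, toRight_disjSum] using ⟨hF, hC, hFC⟩
  · rintro ⟨hF, hC, hFC⟩
    exact ⟨S.toLeft, S.toRight, ⟨⟨hF, hC⟩, hFC⟩, toLeft_disjSum_toRight⟩

lemma map_inl_mem_subdivCylinder : F.map .inl ∈ K.subdivCylinder.faces ↔ F ∈ K.faces := by
  rw [← disjSum_empty, mem_subdivCylinder, toLeft_disjSum, toRight_disjSum]
  simp [mem_trunc]

lemma mem_link_subdivCylinder : S ∈ (K.subdivCylinder.link (F.map .inl)).faces ↔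
    Disjoint F S.toLeft ∧ F ∪ S.toLeft ∈ K.faces ∧ S.toRight ∈ (K.trunc 0).faces ∧
      ∀ G ∈ S.toRight, F ∪ S.toLeft ⊆ G := by
  have disjoint_iff : Disjoint (F.map .inl) S ↔ Disjoint F S.toLeft := by
    simp [disjoint_left]
  rw [mem_link, mem_subdivCylinder, disjoint_iff, toLeft_union, toRight_union, ← disjSum_empty,
    toLeft_disjSum, toRight_disjSum, empty_union]

lemma insert_mem_trunc : insert G C ∈ (K.trunc j).faces ↔
    C ∈ (K.trunc j).faces ∧ G ∈ K.faces ∧ j < #G ∧ ∀ H ∈ C, G ⊆ H ∨ H ⊆ G := by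
  simp only [mem_trunc, insert_subset_iff, forall_mem_insert]
  grind

lemma mem_map_inl {W : Type} [DecidableEq W] {S : Finset (V ⊕ W)} :
    S ∈ (K.map .inl).faces ↔ S.toLeft ∈ K.faces ∧ S.toRight = ∅ := by
  simp only [map, mem_image, ← disjSum_empty, disjSum_eq_iff]
  grind

lemma mem_map_inr {W : Type} [DecidableEq W] {L : SComplex W} {S : Finset (V ⊕ W)} :
    S ∈ (L.map .inr).faces ↔ S.toLeft = ∅ ∧ S.toRight ∈ L.faces := by
  simp only [map, mem_image, ← empty_disjSum, disjSum_eq_iff]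
  grind

lemma subset_map_inl_univ_union_map_inr [Fintype V] {Q : Finset (Finset V)} :
    S ⊆ univ.map .inl ∪ Q.map .inr ↔ S.toRight ⊆ Q := by
  rw [← disjUnion_eq_union _ _ (disjoint_map_inl_map_inr _ _), map_inl_disjUnion_map_inr,
    subset_disjSum, and_iff_right (subset_univ _)]

variable {e : V ⊕ Finset V ↪ ι} {Q : Finset (Finset V)}

/-- Add the elements of `Q` to the link of `F` by decreasing cardinality. The link of the newly
added `G` is then a cone with apex any vertex of `G \ F`. -/
lemma CohomologyVanishes.restrict_link_subdivCylinder [Fintype V]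
    (h : (K.link F).CohomologyVanishes (Function.Embedding.inl.trans e) M i)
    (hQ : ∀ G ∈ Q, #F < #G) :
    ((K.subdivCylinder.link (F.map .inl)).restrict
      (univ.map .inl ∪ Q.map .inr)).CohomologyVanishes e M i := by
  revert hQ
  refine Q.induction_on_min_value card (fun _ => ?_) fun G Q _ hmin ih hQ => ?_
  · rw [← cohomologyVanishes_map_iff] at h
    convert h using 1
    refine SComplex.ext fun S => ?_
    rw [mem_restrict, subset_map_inl_univ_union_map_inr, subset_empty, mem_link_subdivCylinder,
      mem_map_inl, mem_link]
    have empty_mem : ∅ ∈ (K.trunc 0).faces := by simp [mem_trunc]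
    grind
  · obtain ⟨hG, hQ⟩ := (forall_mem_insert _ _ _).1 hQ
    rw [map_insert, union_insert]
    refine .restrict_insert (ih hQ) fun j _ => ?_
    obtain ⟨a, haG, haF⟩ := exists_mem_notMem_of_card_lt_card hG
    refine cohomologyVanishes_of_cone (.inl a) fun S hS => ?_
    rw [mem_restrict, mem_link_singleton, subset_map_inl_univ_union_map_inr,
      mem_link_subdivCylinder, Function.Embedding.inr_apply] at hS ⊢
    simp only [toLeft_insert_inl, toRight_insert_inl, toLeft_insert_inr, toRight_insert_inr,
      insert_comm (Sum.inr G) (Sum.inl a), insert_mem_trunc, forall_mem_insert] at hS ⊢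
    obtain ⟨⟨hGS, hFS, -, ⟨hC, hGK, hG₀, hcomp⟩, hGF, -⟩, hSQ⟩ := hS
    have G_subset (H : Finset V) (hH : H ∈ S.toRight) : G ⊆ H := (hcomp H hH).elim id
      fun hHG => (eq_of_subset_of_card_le hHG (hmin H (hSQ hH))).ge
    rw [union_insert]
    have insert_subset_G : insert a (F ∪ S.toLeft) ⊆ G := insert_subset haG hGF
    exact ⟨⟨by simpa using hGS, disjoint_insert_right.2 ⟨haF, hFS⟩,
      K.down_closed hGK insert_subset_G, ⟨hC, hGK, hG₀, hcomp⟩, insert_subset_G,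
      fun H hH => insert_subset_G.trans (G_subset H hH)⟩, hSQ⟩

lemma cohomologyVanishes_restrict_link_subdivCylinder
    (hF : F ∈ K.faces) (hFQ : F ∈ Q) (hF₀ : F.Nonempty) :
    ((K.subdivCylinder.link (F.map .inl)).restrict (Q.map .inr)).CohomologyVanishes e M i := by
  refine cohomologyVanishes_of_cone (.inr F) fun S hS => ?_
  obtain ⟨hS, hSQ⟩ := mem_restrict.1 hS
  obtain ⟨-, -, hC, hFC⟩ := mem_link_subdivCylinder.1 hS
  have left_eq : S.toLeft = ∅ := (subset_map_inr.1 hSQ).1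
  rw [left_eq, union_empty] at hFC
  refine mem_restrict.2 ⟨mem_link_subdivCylinder.2 ?_, insert_subset (by simpa) hSQ⟩
  rw [toLeft_insert_inr, left_eq, union_empty, toRight_insert_inr, insert_mem_trunc]
  exact ⟨disjoint_empty_right F, hF, ⟨hC, hF, hF₀.card_pos, fun G hG => .inl (hFC G hG)⟩,
    (forall_mem_insert _ _ _).2 ⟨subset_rfl, hFC⟩⟩

lemma restrict_subdivCylinder_eq_map [Fintype V] (hK : ∅ ∈ K.faces) :
    K.subdivCylinder.restrict (({G | j < #G} : Finset (Finset V)).map .inr) =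
      (K.trunc j).map .inr := by
  refine SComplex.ext fun S => ?_
  rw [mem_restrict, subset_map_inr, mem_map_inr, mem_subdivCylinder, mem_trunc, mem_trunc]
  constructor
  · rintro ⟨⟨-, ⟨hC, -, hchain⟩, -⟩, hS, hCj⟩
    exact ⟨hS, hC, fun G hG => (mem_filter.1 (hCj hG)).2, hchain⟩
  · rintro ⟨hS, hC, hCj, hchain⟩
    refine ⟨⟨hS ▸ hK, ⟨hC, fun G hG => j.zero_le.trans_lt (hCj G hG), hchain⟩, fun G _ => ?_⟩,
      hS, fun G hG => mem_filter.2 ⟨mem_univ G, hCj G hG⟩⟩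
    exact hS ▸ empty_subset G

lemma CohomologyVanishes.trunc [Finite V] (hK : ∅ ∈ K.faces)
    (h : ∀ F ∈ K.faces, #F ≤ j →
      (K.link F).CohomologyVanishes (Function.Embedding.inl.trans e) M i) :
    (K.trunc j).CohomologyVanishes (Function.Embedding.inr.trans e) M i := by
  have := Fintype.ofFinite V
  rw [← cohomologyVanishes_map_iff, ← restrict_subdivCylinder_eq_map hK]
  refine .restrict_of_union (A := univ.map .inl) (disjoint_map_inl_map_inr _ _) fun A hA hAK => ?_
  obtain ⟨F, -, rfl⟩ := subset_map_iff.1 hA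
  have hF : F ∈ K.faces := map_inl_mem_subdivCylinder.1 hAK
  obtain hFj | hFj := le_or_gt #F j
  · exact (h F hF hFj).restrict_link_subdivCylinder fun G hG =>
      hFj.trans_lt (mem_filter.1 hG).2
  · refine cohomologyVanishes_restrict_union (fun B hB hBK i => ?_) i
    obtain ⟨G, -, rfl⟩ := subset_map_iff.1 hB
    obtain ⟨hFG, hFGK⟩ := mem_link.1 hBK
    rw [link_link hFG, ← map_union]
    rw [← map_union, map_inl_mem_subdivCylinder] at hFGK
    have hcard : j < #(F ∪ G) := hFj.trans_le (card_le_card subset_union_left)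
    exact cohomologyVanishes_restrict_link_subdivCylinder hFGK
      (mem_filter.2 ⟨mem_univ _, hcard⟩) (card_pos.1 (j.zero_le.trans_lt hcard))

variable {k : Type} [Field k] {ℓ : ℕ}

lemma SerreS.hVanish_trunc [Fintype V] (h : SerreS k ℓ K) (hij : i + j < K.rank) (hiℓ : i < ℓ) :
    HVanish k (K.trunc j) i := by
  let e : V ⊕ Finset V ↪ Fin (Fintype.card V) ⊕ₗ Fin (Fintype.card (Finset V)) :=
    ((numbering V).sumMap (numbering (Finset V))).trans toLex.toEmbedding
  refine CohomologyVanishes.hVanish (e := Function.Embedding.inr.trans e)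
    (fun F G => Sum.Lex.inr_lt_inr_iff) ?_
  obtain ⟨G, hG, hcard⟩ := exists_card_eq_rank (K := K) <| nonempty_iff_ne_empty.2 fun h => by
    simp [rank, h] at hij
  obtain rfl | hi := i.eq_zero_or_pos
  · have singleton_mem : {G} ∈ (K.trunc j).faces := by simp [mem_trunc, hG]; omega
    exact cohomologyVanishes_zero singleton_mem
  · exact .trunc (K.down_closed hG (empty_subset G)) fun F hF hFj =>
      h.cohomologyVanishes_link_of_lt_rank hi hiℓ hF (by omega)

end FacePoset

end SComplex

/-- If `k[O(P)]` satisfies `(S_ℓ)` then `H̃_{i-1}(O(P_{>j}); k) = 0` whenever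
`i + j < d` and `0 ≤ i < ℓ` (where `d = dim k[O(P)]`); in particular, if a simplicial complex
`Δ` satisfies `(S_ℓ)` then `H̃_{i-1}([Δ]_{>j}; k) = 0` whenever `i + j < d` and `0 ≤ i < ℓ`. -/
theorem serre_vanishing_of_truncations (k : Type) [Field k] :
    (∀ (P : Type) [DecidableEq P] [Fintype P] [PartialOrder P]
        [∀ a b : P, Decidable (a ≤ b)] (ℓ : ℕ),
      SComplex.SerreS k ℓ (orderComplex P) →
        ∀ i j : ℕ, i + j < (orderComplex P).rank → i < ℓ →
          SComplex.HVanish k (ocAbove P j) i)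
    ∧ (∀ (V : Type) [DecidableEq V] [Fintype V] (K : SComplex V) (ℓ : ℕ),
      SComplex.SerreS k ℓ K →
        ∀ i j : ℕ, i + j < K.rank → i < ℓ →
          SComplex.HVanish k (K.trunc j) i) :=
  ⟨fun _ _ _ _ _ _ h _ _ hij hiℓ => h.hVanish_ocAbove hij hiℓ,
    fun _ _ _ _ _ h _ _ hij hiℓ => h.hVanish_trunc hij hiℓ⟩
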